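/- Let A_Γ be an Artin group whose defining graph Γ is triangle-free with all edge labels ≥ 3, Γ is connected with at least 3 vertices, Γ has no separating vertices and no separating edges, and every label-preserving graph automorphism of Γ fixing some vertex and each of its neighbors is the identity. Let N ≤ Aut(A_Γ) be the subgroup generated by the global inversion (the automorphism sending each standard generator to its inverse) together with the automorphisms induced by label-preserving graph automorphisms of Γ. Then every bijective isometry f of (A_Γ, d) can be written uniquely as f(x) = g·ψ(x) for some g ∈ A_Γ and ψ ∈ N; consequently Isom(A_Γ, d) is isomorphic to the semidirect product A_Γ ⋊ N. -/

import Mathlib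

/-- The alternating product `x y x y ⋯` with `n` factors. -/
def altProd {G : Type*} [Monoid G] : ℕ → G → G → G
  | 0, _, _ => 1
  | n + 1, x, y => x * altProd n y x

/-- A simple graph with each edge labeled by an integer `≥ 2`. -/
structure LabeledGraph (V : Type*) where
  graph : SimpleGraph V
  label : V → V → ℕ
  label_symm : ∀ a b, label a b = label b a
  two_le_label : ∀ ⦃a b⦄, graph.Adj a b → 2 ≤ label a b

namespace LabeledGraph

variable {V : Type*} (Γ : LabeledGraph V)

/-- The Artin relations `prod(a,b;m) = prod(b,a;m)` associated to a labeled graph,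
as elements of the free group on the vertices. -/
def artinRels : Set (FreeGroup V) :=
  { r | ∃ a b, Γ.graph.Adj a b ∧
      r = altProd (Γ.label a b) (FreeGroup.of a) (FreeGroup.of b) *
          (altProd (Γ.label a b) (FreeGroup.of b) (FreeGroup.of a))⁻¹ }

end LabeledGraph

/-- The Artin group with defining labeled graph `Γ`. -/
abbrev ArtinGroup {V : Type*} (Γ : LabeledGraph V) :=
  PresentedGroup Γ.artinRels

/-- The standard generator of the Artin group corresponding to a vertex. -/
def artinGen {V : Type*} (Γ : LabeledGraph V) (v : V) : ArtinGroup Γ :=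
  PresentedGroup.of v

/-- Word length of a group element with respect to a set `S` of generators
(words may use generators and their inverses). -/
noncomputable def wordLength {G : Type*} [Group G] (S : Set G) (g : G) : ℕ :=
  sInf { n | ∃ l : List G, l.length = n ∧ (∀ x ∈ l, x ∈ S ∨ x⁻¹ ∈ S) ∧ l.prod = g }

/-- Word metric with respect to a generating set `S`. -/
noncomputable def wordDist {G : Type*} [Group G] (S : Set G) (g h : G) : ℝ :=
  (wordLength S (g⁻¹ * h) : ℝ)

/-- The word metric on an Artin group with respect to the standard generators. -/
noncomputable def artinDist {V : Type*} (Γ : LabeledGraph V) :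
    ArtinGroup Γ → ArtinGroup Γ → ℝ :=
  wordDist (Set.range (artinGen Γ))

/-- `(L,A)`-quasi-isometric embedding between spaces with distance functions. -/
def IsQIEmbedding {X Y : Type*} (L A : ℝ) (dX : X → X → ℝ) (dY : Y → Y → ℝ)
    (q : X → Y) : Prop :=
  ∀ x x', dX x x' / L - A ≤ dY (q x) (q x') ∧ dY (q x) (q x') ≤ L * dX x x' + A

/-- `(L,A)`-quasi-isometry: an `(L,A)`-quasi-isometric embedding with `A`-dense image. -/
def IsQuasiIsometry {X Y : Type*} (L A : ℝ) (dX : X → X → ℝ) (dY : Y → Y → ℝ)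
    (q : X → Y) : Prop :=
  IsQIEmbedding L A dX dY q ∧ ∀ y : Y, ∃ x : X, dY (q x) y ≤ A

/-- CLTTF: connected with at least three vertices, large type, triangle free. -/
def LabeledGraph.CLTTF {V : Type*} (Γ : LabeledGraph V) : Prop :=
  Γ.graph.Connected ∧ 3 ≤ Nat.card V ∧
    (∀ ⦃a b⦄, Γ.graph.Adj a b → 3 ≤ Γ.label a b) ∧ Γ.graph.CliqueFree 3

/-- A decomposition of `Γ` as a union of two full subgraphs (given by vertex sets
`S₁`, `S₂`, each different from `T`) intersecting along `T`. -/
def LabeledGraph.IsSepDecomp {V : Type*} (Γ : LabeledGraph V) (S₁ S₂ T : Set V) : Prop :=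
  S₁ ∪ S₂ = Set.univ ∧ S₁ ∩ S₂ = T ∧ S₁ ≠ T ∧ S₂ ≠ T ∧
    ∀ ⦃a b⦄, Γ.graph.Adj a b → (a ∈ S₁ ∧ b ∈ S₁) ∨ (a ∈ S₂ ∧ b ∈ S₂)

/-- `Γ` has a separating vertex or a separating edge. -/
def LabeledGraph.HasSeparatingVertexOrEdge {V : Type*} (Γ : LabeledGraph V) : Prop :=
  (∃ v : V, ∃ S₁ S₂ : Set V, Γ.IsSepDecomp S₁ S₂ {v}) ∨
    ∃ a b : V, Γ.graph.Adj a b ∧ ∃ S₁ S₂ : Set V, Γ.IsSepDecomp S₁ S₂ {a, b}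

/-- An isomorphism of labeled graphs: a graph isomorphism preserving edge labels. -/
structure LabeledGraphIso {V V' : Type*} (Γ : LabeledGraph V) (Γ' : LabeledGraph V') where
  toEquiv : V ≃ V'
  adj_iff : ∀ a b, Γ'.graph.Adj (toEquiv a) (toEquiv b) ↔ Γ.graph.Adj a b
  label_eq : ∀ ⦃a b⦄, Γ.graph.Adj a b → Γ'.label (toEquiv a) (toEquiv b) = Γ.label a b

/-- `f` is an isometry for the distance function `d`. -/
def IsIsometryOf {X : Type*} (d : X → X → ℝ) (f : X → X) : Prop :=
  ∀ x y, d (f x) (f y) = d x y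

/-- The left coset `g•H` as a set. -/
def leftCosetSet {G : Type*} [Group G] (g : G) (H : Subgroup G) : Set G :=
  (fun x => g * x) '' (H : Set G)

/-- The standard subgroup generated by the two endpoints of an edge. -/
def edgeSubgroup {V : Type*} (Γ : LabeledGraph V) (a b : V) : Subgroup (ArtinGroup Γ) :=
  Subgroup.closure {artinGen Γ a, artinGen Γ b}

/-- The standard subgroup generated by a set of vertices. -/
def standardSubgroup {V : Type*} (Γ : LabeledGraph V) (S : Set V) :
    Subgroup (ArtinGroup Γ) :=
  Subgroup.closure (artinGen Γ '' S)

/-- The element `Δ_e = prod(a,b;m)` associated to an edge `e = {a,b}` of label `m`. -/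
def artinDelta {V : Type*} (Γ : LabeledGraph V) (a b : V) : ArtinGroup Γ :=
  altProd (Γ.label a b) (artinGen Γ a) (artinGen Γ b)

/-- A leaf of a graph: a vertex with a unique neighbour. -/
def LabeledGraph.IsLeaf {V : Type*} (Γ : LabeledGraph V) (a : V) : Prop :=
  ∃! b, Γ.graph.Adj a b

/-- A stable vertex: not a leaf, or a leaf whose unique incident edge has odd label
and whose other endpoint is not a leaf. -/
def LabeledGraph.StableVertex {V : Type*} (Γ : LabeledGraph V) (a : V) : Prop :=
  ¬ Γ.IsLeaf a ∨
    (Γ.IsLeaf a ∧ ∃ b, Γ.graph.Adj a b ∧ Odd (Γ.label a b) ∧ ¬ Γ.IsLeaf b)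

/-- Stable cosets: left cosets of cyclic subgroups `⟨Δ_e⟩` for an edge `e`, or `⟨a⟩`
for a stable vertex `a`. -/
def StableCoset {V : Type*} (Γ : LabeledGraph V) (C : Set (ArtinGroup Γ)) : Prop :=
  (∃ (g : ArtinGroup Γ) (a b : V), Γ.graph.Adj a b ∧
      C = leftCosetSet g (Subgroup.zpowers (artinDelta Γ a b))) ∨
    ∃ (g : ArtinGroup Γ) (a : V), Γ.StableVertex a ∧
      C = leftCosetSet g (Subgroup.zpowers (artinGen Γ a))

/-- The Hausdorff distance between `A` and `B` (w.r.t. the distance function `d`)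
is less than `D`. -/
def HausdorffClose {X : Type*} (d : X → X → ℝ) (D : ℝ) (A B : Set X) : Prop :=
  (∀ a ∈ A, ∃ b ∈ B, d a b < D) ∧ ∀ b ∈ B, ∃ a ∈ A, d a b < D

/-- Two subsets are parallel if they are at finite Hausdorff distance. -/
def CoarseParallel {X : Type*} (d : X → X → ℝ) (A B : Set X) : Prop :=
  ∃ D : ℝ, HausdorffClose d D A B

/-- A `2`-dimensional Artin group: every triangle with labels `p, q, r` satisfies
`1/p + 1/q + 1/r ≤ 1`. -/
def LabeledGraph.TwoDimensional {V : Type*} (Γ : LabeledGraph V) : Prop :=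
  ∀ a b c : V, Γ.graph.Adj a b → Γ.graph.Adj b c → Γ.graph.Adj a c →
    (1 / (Γ.label a b : ℚ)) + 1 / (Γ.label b c : ℚ) + 1 / (Γ.label a c : ℚ) ≤ 1

/-- The global inversion: the automorphism sending each standard generator to its
inverse. -/
def IsGlobalInversion {V : Type*} (Γ : LabeledGraph V)
    (ψ : MulAut (ArtinGroup Γ)) : Prop :=
  ∀ v : V, ψ (artinGen Γ v) = (artinGen Γ v)⁻¹

/-- An automorphism induced by a label-preserving graph automorphism of `Γ`. -/
def IsGraphInduced {V : Type*} (Γ : LabeledGraph V)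
    (ψ : MulAut (ArtinGroup Γ)) : Prop :=
  ∃ α : LabeledGraphIso Γ Γ, ∀ v : V, ψ (artinGen Γ v) = artinGen Γ (α.toEquiv v)

/-- The subgroup `N ≤ Aut(A_Γ)` generated by the global inversion and the
automorphisms induced by label-preserving graph automorphisms of `Γ`. -/
def specialAutGroup {V : Type*} (Γ : LabeledGraph V) :
    Subgroup (MulAut (ArtinGroup Γ)) :=
  Subgroup.closure { ψ | IsGlobalInversion Γ ψ ∨ IsGraphInduced Γ ψ }

/-!
Call a letter `x = a^{±1}` a first letter of `g` if some geodesic for `g` begins with `x`. The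
geodesics of a triangle-free Artin group are tame: two distinct first letters `x, y` of `g` come
from adjacent vertices `a, b`, the length of `g` is then at least the label `m` of this edge, and
`Δ` is the only element of length `m` with first letters `a` and `b`. For a single edge this
follows from the normal forms `p * n * Δ ^ k` of the dihedral Artin group, where the shortest words
for an element can be computed. If two vertices are not adjacent, the group splits along the link of
one of them, which generates a free group since the graph has no triangles. Each coset of this free
group has a unique shortest element, so lengths are additive along the normal forms of the amalgam
and tameness is inherited from the factors.

An isometry `F` fixing `1` permutes the letters. Whether the letters `x` and `y` have a common
multiple of length `m`, and whether it is unique, is visible in the metric; the first determines the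
labeled graph, and, as `m ≥ 3`, the second determines whether `x` and `y` have the same sign. So, up
to the global inversion, `F` preserves signs at every base point. As `F` maps the prefixes `ab` and
`aba` of `Δ` to prefixes of the image of `Δ`, the graph automorphisms by which `F` acts at the base
points `1` and `a` agree on the star of `a`, hence everywhere by hypothesis.
-/

section AltProd

theorem map_altProd {G H : Type*} [Monoid G] [Monoid H] (f : G →* H) (n : ℕ) (x y : G) :
    f (altProd n x y) = altProd n (f x) (f y) := by
  induction n generalizing x y with
  | zero => exact map_one f
  | succ n ih => rw [altProd, altProd, map_mul, ih]

theorem altProd_add {G : Type*} [Monoid G] (k l : ℕ) (x y : G) :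
    altProd (k + l) x y =
      altProd k x y * if k.bodd then altProd l y x else altProd l x y := by
  induction k generalizing x y with
  | zero => simp [altProd]
  | succ k ih =>
    rw [Nat.add_right_comm, altProd, altProd, ih, mul_assoc]
    cases h : k.bodd <;> simp [h]

theorem altProd_succ_right {G : Type*} [Monoid G] (n : ℕ) (x y : G) :
    altProd (n + 1) x y = altProd n x y * if n.bodd then y else x := by
  simpa only [altProd, mul_one] using altProd_add n 1 x y

theorem altProd_inv {G : Type*} [Group G] (n : ℕ) (x y : G) :
    (altProd n x y)⁻¹ = if n.bodd then altProd n x⁻¹ y⁻¹ else altProd n y⁻¹ x⁻¹ := by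
  induction n generalizing x y with
  | zero => simp [altProd]
  | succ n ih =>
    rw [altProd_succ_right, mul_inv_rev, ih]
    cases h : n.bodd <;> simp [h, altProd]

theorem altProd_inv_comm {G : Type*} [Group G] {n : ℕ} {x y : G}
    (h : altProd n x y = altProd n y x) : altProd n x⁻¹ y⁻¹ = altProd n y⁻¹ x⁻¹ := by
  have hx := altProd_inv n x y
  have hy := altProd_inv n y x
  rw [h] at hx
  cases hn : n.bodd <;> simp_all

end AltProd

section WordLength

variable {G : Type*} [Group G] {S : Set G}

theorem wordLength_prod_le {l : List G} (hl : ∀ x ∈ l, x ∈ S ∨ x⁻¹ ∈ S) :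
    wordLength S l.prod ≤ l.length :=
  Nat.sInf_le ⟨l, rfl, hl, rfl⟩

@[simp]
theorem wordLength_one : wordLength S 1 = 0 :=
  Nat.le_zero.1 (wordLength_prod_le (l := []) (by simp))

theorem wordLength_le_one {x : G} (hx : x ∈ S ∨ x⁻¹ ∈ S) : wordLength S x ≤ 1 := by
  simpa using wordLength_prod_le (l := [x]) (by simpa using hx)

theorem exists_word_of_closure_eq_top (hS : Subgroup.closure S = ⊤) (g : G) :
    ∃ l : List G, l.length = wordLength S g ∧ (∀ x ∈ l, x ∈ S ∨ x⁻¹ ∈ S) ∧ l.prod = g := by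
  have hmem : g ∈ Submonoid.closure (S ∪ S⁻¹) := by
    rw [← Subgroup.closure_toSubmonoid, hS]
    exact Submonoid.mem_top g
  obtain ⟨l, hl, hg⟩ := Submonoid.exists_list_of_mem_closure hmem
  exact Nat.sInf_mem (s := {n | ∃ l : List G, l.length = n ∧ _ ∧ l.prod = g})
    ⟨l.length, l, rfl, hl, hg⟩

theorem wordLength_mul_le (hS : Subgroup.closure S = ⊤) (g h : G) :
    wordLength S (g * h) ≤ wordLength S g + wordLength S h := by
  obtain ⟨l, hl, hlS, rfl⟩ := exists_word_of_closure_eq_top hS g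
  obtain ⟨l', hl', hlS', rfl⟩ := exists_word_of_closure_eq_top hS h
  rw [← hl, ← hl', ← List.length_append, ← List.prod_append]
  exact wordLength_prod_le fun x hx => (List.mem_append.1 hx).elim (hlS x) (hlS' x)

theorem wordLength_mul_le_add_one (hS : Subgroup.closure S = ⊤) {x : G}
    (hx : x ∈ S ∨ x⁻¹ ∈ S) (g : G) : wordLength S (x * g) ≤ wordLength S g + 1 := by
  have := wordLength_mul_le hS x g
  have := wordLength_le_one hx
  omega

theorem wordLength_le_mul_add_one (hS : Subgroup.closure S = ⊤) {x : G}
    (hx : x ∈ S ∨ x⁻¹ ∈ S) (g : G) : wordLength S g ≤ wordLength S (x * g) + 1 := by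
  simpa using wordLength_mul_le_add_one hS (x := x⁻¹) (by simpa using hx.symm) (x * g)

theorem exists_wordLength_eq_inv_mul_add_one (hS : Subgroup.closure S = ⊤) {g : G} (hg : g ≠ 1) :
    ∃ x, (x ∈ S ∨ x⁻¹ ∈ S) ∧ wordLength S g = wordLength S (x⁻¹ * g) + 1 := by
  obtain ⟨_ | ⟨x, l⟩, hl, hlS, rfl⟩ := exists_word_of_closure_eq_top hS g
  · exact absurd rfl hg
  have hx := hlS x List.mem_cons_self
  refine ⟨x, hx, ?_⟩
  have hle := wordLength_prod_le fun y hy => hlS y (List.mem_cons_of_mem x hy)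
  have hge := wordLength_mul_le_add_one hS hx l.prod
  simp only [List.prod_cons, List.length_cons, inv_mul_cancel_left] at *
  omega

theorem wordLength_induction (hS : Subgroup.closure S = ⊤) {p : G → Prop} (one : p 1)
    (mul : ∀ x g, x ∈ S ∨ x⁻¹ ∈ S → wordLength S (x * g) = wordLength S g + 1 → p g → p (x * g))
    (g : G) : p g := by
  induction hn : wordLength S g generalizing g with
  | zero =>
    by_contra hg
    obtain ⟨x, -, hx⟩ := exists_wordLength_eq_inv_mul_add_one hS (g := g) fun h => hg (h ▸ one)
    omega
  | succ n ih =>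
    obtain ⟨x, hxS, hx⟩ := exists_wordLength_eq_inv_mul_add_one hS (g := g) fun h => by simp_all
    rw [← mul_inv_cancel_left x g]
    exact mul x _ hxS (by rwa [mul_inv_cancel_left]) (ih _ (by omega))

theorem eq_one_of_wordLength_eq_zero (hS : Subgroup.closure S = ⊤) {g : G}
    (h : wordLength S g = 0) : g = 1 := by
  by_contra hg
  obtain ⟨x, -, hx⟩ := exists_wordLength_eq_inv_mul_add_one hS hg
  omega

theorem wordLength_map_le {H : Type*} [Group H] {T : Set H} (hS : Subgroup.closure S = ⊤)
    (hT : Subgroup.closure T = ⊤) (f : G →* H) (hf : ∀ x ∈ S, f x ∈ T ∨ (f x)⁻¹ ∈ T) (g : G) :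
    wordLength T (f g) ≤ wordLength S g := by
  induction g using wordLength_induction hS with
  | one => simp
  | mul x g hx hlen ih =>
    have hfx : f x ∈ T ∨ (f x)⁻¹ ∈ T := by
      rcases hx with hx | hx
      · exact hf x hx
      · simpa [or_comm] using hf _ hx
    rw [map_mul, hlen]
    exact (wordLength_mul_le_add_one hT hfx _).trans (by omega)

theorem wordLength_eq_of_le_of_exists_lt (hS : Subgroup.closure S = ⊤) (l : G → ℕ) (one : l 1 = 0)
    (le : ∀ x g, x ∈ S ∨ x⁻¹ ∈ S → l (x * g) ≤ l g + 1)
    (exists_lt : ∀ g, g ≠ 1 → ∃ x, (x ∈ S ∨ x⁻¹ ∈ S) ∧ l (x * g) < l g) (g : G) :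
    wordLength S g = l g := by
  apply le_antisymm
  · induction hn : l g using Nat.strong_induction_on generalizing g with
    | _ n ih =>
      by_cases hg : g = 1
      · simp [hg]
      · obtain ⟨x, hxS, hx⟩ := exists_lt g hg
        have := ih _ (hn ▸ hx) _ rfl
        have := wordLength_le_mul_add_one hS hxS g
        omega
  · induction g using wordLength_induction hS with
    | one => simp [one]
    | mul x g hx hlen ih =>
      have := le x g hx
      omega

section HomInt

variable (hS : Subgroup.closure S = ⊤) {φ : G →* Multiplicative ℤ}
  (hφ : ∀ x ∈ S, φ x = Multiplicative.ofAdd 1)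
include hφ

theorem toAdd_eq_one_or_neg_one_of_mem {x : G} (hx : x ∈ S ∨ x⁻¹ ∈ S) :
    (φ x).toAdd = 1 ∨ (φ x).toAdd = -1 := by
  refine hx.imp (fun h => by simp [hφ x h]) fun h => ?_
  have := congrArg Multiplicative.toAdd (hφ _ h)
  simp only [map_inv, toAdd_inv, toAdd_ofAdd] at this
  omega

include hS

theorem abs_toAdd_le_wordLength (g : G) : |(φ g).toAdd| ≤ wordLength S g := by
  induction g using wordLength_induction hS with
  | one => simp
  | mul x g hx hlen ih =>
    have := toAdd_eq_one_or_neg_one_of_mem hφ hx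
    rw [map_mul, toAdd_mul, hlen]
    rw [abs_le] at *
    omega

theorem toAdd_emod_two (g : G) : (φ g).toAdd % 2 = wordLength S g % 2 := by
  induction g using wordLength_induction hS with
  | one => simp
  | mul x g hx hlen ih =>
    have := toAdd_eq_one_or_neg_one_of_mem hφ hx
    rw [map_mul, toAdd_mul, hlen]
    omega

theorem wordLength_mul_ne {x : G} (hx : x ∈ S ∨ x⁻¹ ∈ S) (g : G) :
    wordLength S (x * g) ≠ wordLength S g := by
  have h := toAdd_emod_two hS hφ (x * g)
  have := toAdd_emod_two hS hφ g
  have := toAdd_eq_one_or_neg_one_of_mem hφ hx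
  rw [map_mul, toAdd_mul] at h
  omega

end HomInt

end WordLength

namespace ArtinGroup

section Letters

variable {V : Type*} (Γ : LabeledGraph V)

/-- The homomorphism out of an Artin group determined by images of the standard generators
that satisfy the Artin relations. -/
def lift {G : Type*} [Group G] (f : V → G)
    (hf : ∀ a b, Γ.graph.Adj a b →
      altProd (Γ.label a b) (f a) (f b) = altProd (Γ.label a b) (f b) (f a)) :
    ArtinGroup Γ →* G :=
  PresentedGroup.toGroup (f := f) <| by
    rintro r ⟨a, b, hab, rfl⟩
    simp [map_altProd, hf a b hab]

@[simp]
theorem lift_gen {G : Type*} [Group G] (f : V → G)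
    (hf : ∀ a b, Γ.graph.Adj a b →
      altProd (Γ.label a b) (f a) (f b) = altProd (Γ.label a b) (f b) (f a)) (v : V) :
    lift Γ f hf (artinGen Γ v) = f v :=
  PresentedGroup.toGroup.of _

theorem hom_ext {G : Type*} [Group G] {f g : ArtinGroup Γ →* G}
    (h : ∀ v, f (artinGen Γ v) = g (artinGen Γ v)) : f = g :=
  PresentedGroup.ext h

theorem mulAut_ext {φ ψ : MulAut (ArtinGroup Γ)}
    (h : ∀ v, φ (artinGen Γ v) = ψ (artinGen Γ v)) : φ = ψ :=
  MulEquiv.toMonoidHom_injective (hom_ext Γ h)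

theorem altProd_gen_comm {a b : V} (h : Γ.graph.Adj a b) :
    altProd (Γ.label a b) (artinGen Γ a) (artinGen Γ b) =
      altProd (Γ.label a b) (artinGen Γ b) (artinGen Γ a) := by
  have hrel : PresentedGroup.mk Γ.artinRels
      (altProd (Γ.label a b) (FreeGroup.of a) (FreeGroup.of b) *
        (altProd (Γ.label a b) (FreeGroup.of b) (FreeGroup.of a))⁻¹) = 1 :=
    PresentedGroup.one_of_mem ⟨a, b, h, rfl⟩
  rw [map_mul, map_inv, mul_inv_eq_one, map_altProd, map_altProd] at hrel
  exact hrel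

theorem artinDelta_comm {a b : V} (h : Γ.graph.Adj a b) :
    artinDelta Γ b a = artinDelta Γ a b := by
  rw [artinDelta, artinDelta, Γ.label_symm b a, altProd_gen_comm Γ h]

theorem closure_range_gen : Subgroup.closure (Set.range (artinGen Γ)) = ⊤ :=
  PresentedGroup.closure_range_of _

/-- The group element of a letter: a vertex with a sign, where `true` stands for the generator
and `false` for its inverse. -/
def letter (x : V × Bool) : ArtinGroup Γ :=
  if x.2 then artinGen Γ x.1 else (artinGen Γ x.1)⁻¹

@[simp]
theorem letter_true (v : V) : letter Γ (v, true) = artinGen Γ v := rfl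

@[simp]
theorem letter_false (v : V) : letter Γ (v, false) = (artinGen Γ v)⁻¹ := rfl

theorem letter_not (x : V × Bool) : letter Γ (x.1, !x.2) = (letter Γ x)⁻¹ := by
  rcases x with ⟨v, _ | _⟩ <;> simp

theorem letter_mem (x : V × Bool) :
    letter Γ x ∈ Set.range (artinGen Γ) ∨ (letter Γ x)⁻¹ ∈ Set.range (artinGen Γ) := by
  rcases x with ⟨v, _ | _⟩ <;> simp

theorem exists_letter_eq {g : ArtinGroup Γ}
    (hg : g ∈ Set.range (artinGen Γ) ∨ g⁻¹ ∈ Set.range (artinGen Γ)) : ∃ x, letter Γ x = g := by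
  rcases hg with ⟨v, hv⟩ | ⟨v, hv⟩
  · exact ⟨(v, true), hv⟩
  · exact ⟨(v, false), by rw [letter_false, hv, inv_inv]⟩

end Letters

section Len

variable {V : Type*} {Γ : LabeledGraph V}

/-- Word length with respect to the standard generators. -/
noncomputable def len (g : ArtinGroup Γ) : ℕ := wordLength (Set.range (artinGen Γ)) g

theorem geodesic_induction {p : ArtinGroup Γ → Prop} (one : p 1)
    (mul : ∀ x g, len (letter Γ x * g) = len g + 1 → p g → p (letter Γ x * g))
    (g : ArtinGroup Γ) : p g :=
  wordLength_induction (closure_range_gen Γ) one (fun y g hy hlen hg => by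
    obtain ⟨x, rfl⟩ := exists_letter_eq Γ hy
    exact mul x g hlen hg) g

theorem len_mul_le (g h : ArtinGroup Γ) : len (g * h) ≤ len g + len h :=
  wordLength_mul_le (closure_range_gen Γ) g h

@[simp]
theorem len_one : len (1 : ArtinGroup Γ) = 0 :=
  wordLength_one

theorem eq_one_of_len_eq_zero {g : ArtinGroup Γ} (hg : len g = 0) : g = 1 :=
  eq_one_of_wordLength_eq_zero (closure_range_gen Γ) hg

theorem exists_len_eq_inv_letter_mul_add_one {g : ArtinGroup Γ} (hg : g ≠ 1) :
    ∃ x, len g = len ((letter Γ x)⁻¹ * g) + 1 := by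
  obtain ⟨y, hyS, hy⟩ := exists_wordLength_eq_inv_mul_add_one (closure_range_gen Γ) hg
  obtain ⟨x, rfl⟩ := exists_letter_eq Γ hyS
  exact ⟨x, hy⟩

theorem len_letter_mul_le (x : V × Bool) (g : ArtinGroup Γ) : len (letter Γ x * g) ≤ len g + 1 :=
  wordLength_mul_le_add_one (closure_range_gen Γ) (letter_mem Γ x) g

theorem len_eq_of_le_of_exists_lt (l : ArtinGroup Γ → ℕ) (one : l 1 = 0)
    (le : ∀ x g, l (letter Γ x * g) ≤ l g + 1)
    (exists_lt : ∀ g, g ≠ 1 → ∃ x, l (letter Γ x * g) < l g) (g : ArtinGroup Γ) : len g = l g :=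
  wordLength_eq_of_le_of_exists_lt (closure_range_gen Γ) l one
    (fun y g hy => by
      obtain ⟨x, rfl⟩ := exists_letter_eq Γ hy
      exact le x g)
    (fun g hg => (exists_lt g hg).imp' (letter Γ) fun x hx => ⟨letter_mem Γ x, hx⟩) g

/-- The exponent sum homomorphism. -/
def expSum : ArtinGroup Γ →* Multiplicative ℤ :=
  lift Γ (fun _ => Multiplicative.ofAdd 1) fun _ _ _ => rfl

@[simp]
theorem expSum_gen (v : V) : expSum (artinGen Γ v) = Multiplicative.ofAdd 1 := lift_gen ..

theorem abs_expSum_le_len (g : ArtinGroup Γ) : |(expSum g).toAdd| ≤ len g :=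
  abs_toAdd_le_wordLength (closure_range_gen Γ) (by simp) g

theorem len_letter_mul_ne (x : V × Bool) (g : ArtinGroup Γ) : len (letter Γ x * g) ≠ len g :=
  wordLength_mul_ne (closure_range_gen Γ) (φ := expSum) (by simp) (letter_mem Γ x) g

@[simp]
theorem len_letter (x : V × Bool) : len (letter Γ x) = 1 := by
  have hne := len_letter_mul_ne x (1 : ArtinGroup Γ)
  have hle := len_letter_mul_le x (1 : ArtinGroup Γ)
  rw [mul_one, len_one] at *
  omega

theorem exists_letter_of_len_eq_one {g : ArtinGroup Γ} (hg : len g = 1) : ∃ x, letter Γ x = g := by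
  obtain ⟨x, hx⟩ := exists_len_eq_inv_letter_mul_add_one (g := g) fun h => by simp [h] at hg
  exact ⟨x, inv_mul_eq_one.1 (eq_one_of_len_eq_zero (by omega))⟩

theorem toAdd_expSum_altProd (n : ℕ) (a b : V) :
    (expSum (altProd n (artinGen Γ a) (artinGen Γ b))).toAdd = n := by
  induction n generalizing a b with
  | zero => simp [altProd]
  | succ n ih =>
    rw [altProd, map_mul, toAdd_mul, ih, expSum_gen, toAdd_ofAdd]
    push_cast
    ring

theorem len_altProd (n : ℕ) (a b : V) :
    len (altProd n (artinGen Γ a) (artinGen Γ b)) = n := by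
  apply le_antisymm
  · induction n generalizing a b with
    | zero => simp [altProd]
    | succ n ih =>
      exact (len_letter_mul_le (a, true) _).trans (Nat.add_le_add_right (ih b a) 1)
  · have := abs_expSum_le_len (altProd n (artinGen Γ a) (artinGen Γ b))
    rw [toAdd_expSum_altProd, Nat.abs_cast] at this
    exact_mod_cast this

theorem len_artinDelta (a b : V) : len (artinDelta Γ a b) = Γ.label a b := len_altProd _ a b

/-- The letter `x` is the first letter of a geodesic word for `g`. -/
def IsFirstLetter (x : V × Bool) (g : ArtinGroup Γ) : Prop :=
  len ((letter Γ x)⁻¹ * g) < len g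

theorem IsFirstLetter.len_eq {x : V × Bool} {g : ArtinGroup Γ} (h : IsFirstLetter x g) :
    len g = len ((letter Γ x)⁻¹ * g) + 1 := by
  have := len_letter_mul_le x ((letter Γ x)⁻¹ * g)
  rw [mul_inv_cancel_left] at this
  exact le_antisymm this h

theorem len_of_not_isFirstLetter {x : V × Bool} {g : ArtinGroup Γ} (h : ¬ IsFirstLetter x g) :
    len ((letter Γ x)⁻¹ * g) = len g + 1 := by
  rw [← letter_not] at *
  have := len_letter_mul_ne (x.1, !x.2) g
  have := len_letter_mul_le (x.1, !x.2) g
  rw [IsFirstLetter, ← letter_not] at h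
  omega

theorem exists_isFirstLetter {g : ArtinGroup Γ} (hg : g ≠ 1) : ∃ x, IsFirstLetter x g := by
  obtain ⟨x, hx⟩ := exists_len_eq_inv_letter_mul_add_one hg
  exact ⟨x, by rw [IsFirstLetter]; omega⟩

theorem not_isFirstLetter_one (x : V × Bool) : ¬ IsFirstLetter x (1 : ArtinGroup Γ) := by
  simp [IsFirstLetter]

theorem isFirstLetter_letter (x : V × Bool) : IsFirstLetter x (letter Γ x) := by
  simp [IsFirstLetter]

theorem isFirstLetter_altProd {n : ℕ} (hn : n ≠ 0) (a b : V) :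
    IsFirstLetter (a, true) (altProd n (artinGen Γ a) (artinGen Γ b)) := by
  obtain ⟨n, rfl⟩ := Nat.exists_eq_succ_of_ne_zero hn
  rw [IsFirstLetter, letter_true, altProd, inv_mul_cancel_left, len_altProd, ← altProd,
    len_altProd]
  exact n.lt_succ_self

theorem isFirstLetter_artinDelta {a b : V} (h : Γ.graph.Adj a b) :
    IsFirstLetter (a, true) (artinDelta Γ a b) ∧ IsFirstLetter (b, true) (artinDelta Γ a b) := by
  have hlabel : Γ.label a b ≠ 0 := by have := Γ.two_le_label h; omega
  refine ⟨isFirstLetter_altProd hlabel a b, ?_⟩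
  rw [artinDelta, altProd_gen_comm Γ h]
  exact isFirstLetter_altProd hlabel b a

end Len

section Inversion

variable {V : Type*} (Γ : LabeledGraph V)

/-- The endomorphism inverting every standard generator. -/
def inversionHom : ArtinGroup Γ →* ArtinGroup Γ :=
  lift Γ (fun v => (artinGen Γ v)⁻¹) fun _ _ h => altProd_inv_comm (altProd_gen_comm Γ h)

@[simp]
theorem inversionHom_gen (v : V) : inversionHom Γ (artinGen Γ v) = (artinGen Γ v)⁻¹ :=
  lift_gen ..

@[simp]
theorem inversionHom_letter (x : V × Bool) :
    inversionHom Γ (letter Γ x) = letter Γ (x.1, !x.2) := by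
  rcases x with ⟨v, _ | _⟩ <;> simp

theorem inversionHom_comp_self :
    (inversionHom Γ).comp (inversionHom Γ) = MonoidHom.id (ArtinGroup Γ) :=
  hom_ext Γ fun v => by simp

/-- The global inversion. -/
def inversion : MulAut (ArtinGroup Γ) :=
  MonoidHom.toMulEquiv (inversionHom Γ) (inversionHom Γ) (inversionHom_comp_self Γ)
    (inversionHom_comp_self Γ)

@[simp]
theorem inversion_gen (v : V) : inversion Γ (artinGen Γ v) = (artinGen Γ v)⁻¹ :=
  inversionHom_gen Γ v

@[simp]
theorem inversion_letter (x : V × Bool) : inversion Γ (letter Γ x) = letter Γ (x.1, !x.2) :=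
  inversionHom_letter Γ x

@[simp]
theorem inversion_inversion (g : ArtinGroup Γ) : inversion Γ (inversion Γ g) = g :=
  DFunLike.congr_fun (inversionHom_comp_self Γ) g

@[simp]
theorem len_inversion (g : ArtinGroup Γ) : len (inversion Γ g) = len g := by
  have hle : ∀ g, len (inversion Γ g) ≤ len g :=
    wordLength_map_le (closure_range_gen Γ) (closure_range_gen Γ) (inversion Γ).toMonoidHom
      (by simp)
  exact (hle g).antisymm (by simpa using hle (inversion Γ g))

theorem isFirstLetter_inversion {x : V × Bool} {g : ArtinGroup Γ} :
    IsFirstLetter x (inversion Γ g) ↔ IsFirstLetter (x.1, !x.2) g := by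
  have h : (letter Γ x)⁻¹ * inversion Γ g = inversion Γ ((letter Γ (x.1, !x.2))⁻¹ * g) := by
    simp
  rw [IsFirstLetter, IsFirstLetter, h, len_inversion, len_inversion]

end Inversion

end ArtinGroup

open ArtinGroup

/-- The features of geodesics shared by all triangle-free Artin groups: distinct first letters
of an element span an edge, the element is then at least as long as the label of that edge, `Δ`
is the only element of that length beginning with both generators, and geodesics of a standard
parabolic subgroup stay in it. -/
structure LabeledGraph.TameGeodesics {V : Type*} (Γ : LabeledGraph V) : Prop where
  adj : ∀ ⦃x y⦄ ⦃g : ArtinGroup Γ⦄, IsFirstLetter x g → IsFirstLetter y g → x ≠ y →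
    Γ.graph.Adj x.1 y.1
  label_le : ∀ ⦃x y⦄ ⦃g : ArtinGroup Γ⦄, IsFirstLetter x g → IsFirstLetter y g → x ≠ y →
    Γ.label x.1 y.1 ≤ len g
  eq_delta : ∀ ⦃a b⦄ ⦃g : ArtinGroup Γ⦄, Γ.graph.Adj a b → IsFirstLetter (a, true) g →
    IsFirstLetter (b, true) g → len g = Γ.label a b → g = artinDelta Γ a b
  mem : ∀ ⦃J : Set V⦄ ⦃x⦄ ⦃g : ArtinGroup Γ⦄, g ∈ standardSubgroup Γ J → IsFirstLetter x g →
    x.1 ∈ J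

/-! ### Dihedral Artin groups -/

/-- Greedy normal forms in the dihedral Artin group with Garside element `Δ = prod(a,b;m)`: the
lengths of the simple factors, which are alternating words of length strictly between `0` and `m`,
the first letter of the first of them, and the exponent of a final power of `Δ`. The first letters
of the other factors are determined, because a factor begins with the letter that ends the
preceding one. -/
structure DihedralNF where
  power : ℤ
  runs : List ℕ
  first : Bool

namespace DihedralNF

section Action

/-- The normal form with the given data, where the meaningless first letter of a power of `Δ`
is set to `true`. -/
def norm (k : ℤ) (l : List ℕ) (c : Bool) : DihedralNF := ⟨k, l, l.isEmpty || c⟩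

@[simp]
theorem norm_nil (k : ℤ) (c : Bool) : norm k [] c = ⟨k, [], true⟩ := rfl

@[simp]
theorem norm_cons (k : ℤ) (n : ℕ) (l : List ℕ) (c : Bool) : norm k (n :: l) c = ⟨k, n :: l, c⟩ :=
  rfl

/-- The conditions under which the data form a normal form. -/
def Valid (m : ℕ) (S : DihedralNF) : Prop :=
  (∀ n ∈ S.runs, 1 ≤ n ∧ n < m) ∧ (S.runs = [] → S.first = true)

/-- Left multiplication by a generator. -/
def push (m : ℕ) (s : Bool) : DihedralNF → DihedralNF
  | ⟨k, [], _⟩ => ⟨k, [1], s⟩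
  | ⟨k, n :: l, c⟩ =>
    if s = c then ⟨k, 1 :: n :: l, c⟩
    else if n + 1 = m then norm (k + 1) l c else ⟨k, (n + 1) :: l, s⟩

/-- Left multiplication by the inverse of a generator. -/
def pull (m : ℕ) (s : Bool) : DihedralNF → DihedralNF
  | ⟨k, [], _⟩ => ⟨k - 1, [m - 1], !s⟩
  | ⟨k, n :: l, c⟩ =>
    if s = c then if n = 1 then norm k l c else ⟨k, (n - 1) :: l, !c⟩
    else ⟨k - 1, (m - 1) :: n :: l, c⟩

variable {m : ℕ}

theorem valid_one : Valid m ⟨0, [], true⟩ := by simp [Valid]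

theorem valid_norm {k : ℤ} {l : List ℕ} {c : Bool} (hl : ∀ n ∈ l, 1 ≤ n ∧ n < m) :
    Valid m (norm k l c) :=
  ⟨hl, fun h => by simp_all [norm]⟩

theorem valid_cons {k : ℤ} {n : ℕ} {l : List ℕ} {c : Bool} :
    Valid m ⟨k, n :: l, c⟩ ↔ (1 ≤ n ∧ n < m) ∧ ∀ i ∈ l, 1 ≤ i ∧ i < m := by
  simp [Valid]

theorem push_nil (s : Bool) (k : ℤ) (c : Bool) : push m s ⟨k, [], c⟩ = ⟨k, [1], s⟩ := rfl

theorem push_self (s : Bool) (k : ℤ) (n : ℕ) (l : List ℕ) :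
    push m s ⟨k, n :: l, s⟩ = ⟨k, 1 :: n :: l, s⟩ :=
  if_pos rfl

theorem push_not (c : Bool) (k : ℤ) (n : ℕ) (l : List ℕ) :
    push m (!c) ⟨k, n :: l, c⟩ = if n + 1 = m then norm (k + 1) l c else ⟨k, (n + 1) :: l, !c⟩ :=
  if_neg (by simp)

theorem pull_nil (s : Bool) (k : ℤ) (c : Bool) :
    pull m s ⟨k, [], c⟩ = ⟨k - 1, [m - 1], !s⟩ := rfl

theorem pull_self (s : Bool) (k : ℤ) (n : ℕ) (l : List ℕ) :
    pull m s ⟨k, n :: l, s⟩ = if n = 1 then norm k l s else ⟨k, (n - 1) :: l, !s⟩ :=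
  if_pos rfl

theorem pull_not (c : Bool) (k : ℤ) (n : ℕ) (l : List ℕ) :
    pull m (!c) ⟨k, n :: l, c⟩ = ⟨k - 1, (m - 1) :: n :: l, c⟩ :=
  if_neg (by simp)

section Valid

variable (hm : 2 ≤ m) {S : DihedralNF} (hS : S.Valid m) (s : Bool)
include hm hS

theorem valid_push : (push m s S).Valid m := by
  obtain ⟨k, _ | ⟨n, l⟩, c⟩ := S
  · rw [push_nil, valid_cons]
    exact ⟨by omega, by simp⟩
  obtain ⟨hn, hl⟩ := valid_cons.1 hS
  obtain rfl | rfl := Bool.eq_or_eq_not s c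
  · rw [push_self, valid_cons]
    exact ⟨by omega, hS.1⟩
  · rw [push_not]
    split_ifs with h
    · exact valid_norm hl
    · exact valid_cons.2 ⟨by omega, hl⟩

theorem valid_pull : (pull m s S).Valid m := by
  obtain ⟨k, _ | ⟨n, l⟩, c⟩ := S
  · rw [pull_nil, valid_cons]
    exact ⟨by omega, by simp⟩
  obtain ⟨hn, hl⟩ := valid_cons.1 hS
  obtain rfl | rfl := Bool.eq_or_eq_not s c
  · rw [pull_self]
    split_ifs with h
    · exact valid_norm hl
    · exact valid_cons.2 ⟨by omega, hl⟩
  · rw [pull_not, valid_cons]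
    exact ⟨by omega, hS.1⟩

omit hm in
theorem pull_push : pull m s (push m s S) = S := by
  obtain ⟨k, _ | ⟨n, l⟩, c⟩ := S
  · obtain rfl : c = true := hS.2 rfl
    simp [push_nil, pull_self]
  obtain ⟨hn, hl⟩ := valid_cons.1 hS
  obtain rfl | rfl := Bool.eq_or_eq_not s c
  · simp [push_self, pull_self]
  rw [push_not]
  split_ifs with h
  · obtain rfl : n = m - 1 := by omega
    cases l <;> simp [pull_nil, pull_not]
  · rw [pull_self, if_neg (by omega)]
    simp

theorem push_pull : push m s (pull m s S) = S := by
  have hm1 : m - 1 + 1 = m := by omega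
  obtain ⟨k, _ | ⟨n, l⟩, c⟩ := S
  · obtain rfl : c = true := hS.2 rfl
    simpa [pull_nil, hm1] using push_not (m := m) (!s) (k - 1) (m - 1) []
  obtain ⟨hn, hl⟩ := valid_cons.1 hS
  obtain rfl | rfl := Bool.eq_or_eq_not s c
  · rw [pull_self]
    split_ifs with h
    · cases l <;> simp [push_nil, push_self, h]
    · have := push_not (m := m) (!s) k (n - 1) l
      rw [Bool.not_not, Nat.sub_add_cancel hn.1, if_neg (by omega)] at this
      exact this
  · simp [pull_not, push_not, hm1]

end Valid

/-- Left multiplication by a generator, as a permutation of the normal forms. -/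
def perm (hm : 2 ≤ m) (s : Bool) : Equiv.Perm {S : DihedralNF // S.Valid m} where
  toFun S := ⟨push m s S, valid_push hm S.2 s⟩
  invFun S := ⟨pull m s S, valid_pull hm S.2 s⟩
  left_inv S := Subtype.ext (pull_push S.2 s)
  right_inv S := Subtype.ext (push_pull hm S.2 s)

/-- Left multiplication by the alternating word of length `j` that begins with `s`. -/
def pushAlt (m : ℕ) : ℕ → Bool → DihedralNF → DihedralNF
  | 0, _, S => S
  | j + 1, s, S => push m s (pushAlt m j (!s) S)

theorem altProd_perm (hm : 2 ≤ m) (j : ℕ) (s : Bool) (S : {S : DihedralNF // S.Valid m}) :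
    (altProd j (perm hm s) (perm hm (!s)) S : DihedralNF) = pushAlt m j s S := by
  induction j generalizing s with
  | zero => rfl
  | succ j ih =>
    have := ih (!s)
    rw [Bool.not_not] at this
    rw [altProd, pushAlt, ← this]
    rfl

theorem pushAlt_add (i j : ℕ) (s : Bool) (S : DihedralNF) :
    pushAlt m (i + j) s S = pushAlt m i s (pushAlt m j (s ^^ i.bodd) S) := by
  induction i generalizing s with
  | zero => simp [pushAlt]
  | succ i ih =>
    rw [Nat.add_right_comm, pushAlt, ih, pushAlt]
    simp

theorem pushAlt_new_run {j : ℕ} (hj : 1 ≤ j) (hjm : j < m) (k : ℤ) (l : List ℕ) (s : Bool) :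
    pushAlt m j s (norm k l (s ^^ !j.bodd)) = ⟨k, j :: l, s⟩ := by
  induction j, hj using Nat.le_induction generalizing s with
  | base => cases l <;> simp [pushAlt, push_nil, push_self]
  | succ j _ ih =>
    have hs : (s ^^ !(j + 1).bodd) = ((!s) ^^ !j.bodd) := by simp
    rw [pushAlt, hs, ih (by omega)]
    simpa [hjm.ne] using push_not (m := m) (!s) k j l

theorem pushAlt_extend_run (n : ℕ) {j : ℕ} (hj : n + j < m) (k : ℤ) (l : List ℕ) (s : Bool) :
    pushAlt m j s ⟨k, n :: l, s ^^ j.bodd⟩ = ⟨k, (n + j) :: l, s⟩ := by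
  induction j generalizing s with
  | zero => simp [pushAlt]
  | succ j ih =>
    have hs : (s ^^ (j + 1).bodd) = ((!s) ^^ j.bodd) := by
      cases h : j.bodd <;> simp [h]
    rw [pushAlt, hs, ih (by omega)]
    simpa [add_assoc, hj.ne] using push_not (m := m) (!s) k (n + j) l

theorem pushAlt_complete_run {n j : ℕ} (hj : 1 ≤ j) (h : n + j = m) (k : ℤ) (l : List ℕ)
    (s : Bool) : pushAlt m j s ⟨k, n :: l, s ^^ j.bodd⟩ = norm (k + 1) l (!s) := by
  obtain ⟨j, rfl⟩ := Nat.exists_eq_add_of_le' hj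
  have hs : (s ^^ (j + 1).bodd) = ((!s) ^^ j.bodd) := by
    cases h : j.bodd <;> simp [h]
  rw [pushAlt, hs, pushAlt_extend_run n (by omega)]
  simpa [← h, add_assoc] using push_not (m := m) (!s) k (n + j) l

theorem pushAlt_complete_new_run (hm : 2 ≤ m) (k : ℤ) (l : List ℕ) (s : Bool) :
    pushAlt m m s (norm k l ((!s) ^^ m.bodd)) = norm (k + 1) l (!s) := by
  obtain ⟨p, rfl⟩ : ∃ p, m = p + 1 := ⟨m - 1, by omega⟩
  have hs : ((!s) ^^ (p + 1).bodd) = ((!s) ^^ !p.bodd) := by simp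
  rw [hs, pushAlt, pushAlt_new_run (by omega) p.lt_succ_self]
  simpa using push_not (m := p + 1) (!s) k p l

theorem pushAlt_garside (hm : 2 ≤ m) (s : Bool) (k : ℤ) {l : List ℕ}
    (hl : ∀ n ∈ l, 1 ≤ n ∧ n < m) (c : Bool) :
    pushAlt m m s (norm k l c) = norm (k + 1) l (c ^^ m.bodd) := by
  obtain rfl | rfl : c = ((!s) ^^ m.bodd) ∨ c = (s ^^ m.bodd) := by
    cases s <;> cases c <;> cases m.bodd <;> simp
  · rw [pushAlt_complete_new_run hm]
    simp
  obtain _ | ⟨n, l⟩ := l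
  · exact pushAlt_complete_new_run hm k [] s
  obtain ⟨hn, hnm⟩ := hl n List.mem_cons_self
  obtain ⟨j, rfl⟩ := Nat.exists_eq_add_of_le hnm.le
  have hs : (s ^^ (n + j).bodd) = ((s ^^ n.bodd) ^^ j.bodd) := by simp
  have hs' : (!(s ^^ n.bodd)) = (s ^^ !n.bodd) := by simp
  rw [hs, norm_cons, pushAlt_add, pushAlt_complete_run (by omega) rfl, hs',
    pushAlt_new_run hn hnm]
  simp

theorem Valid.eq_norm {S : DihedralNF} (hS : S.Valid m) : S = norm S.power S.runs S.first := by
  obtain ⟨k, _ | ⟨n, l⟩, c⟩ := S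
  · obtain rfl : c = true := hS.2 rfl
    rfl
  · rfl

theorem altProd_perm_comm (hm : 2 ≤ m) (s : Bool) :
    altProd m (perm hm s) (perm hm (!s)) = altProd m (perm hm (!s)) (perm hm s) := by
  ext1 S
  have h := altProd_perm hm m (!s) S
  rw [Bool.not_not] at h
  rw [Subtype.ext_iff, altProd_perm, h, S.2.eq_norm, pushAlt_garside hm _ _ S.2.1,
    pushAlt_garside hm _ _ S.2.1]

end Action

end DihedralNF

namespace DihedralNF

section Length

/-- The length of the normal form with runs `l` and power `k`. When `k` is negative, a run of
length `n` can be merged with a factor `Δ⁻¹` into an alternating word of length `m - n` in the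
inverses of the generators. -/
def cost (m : ℕ) : List ℕ → ℤ → ℤ
  | [], k => m * k.natAbs
  | n :: l, k => min (n + cost m l k) (m - n + cost m l (k + 1))

variable {m : ℕ}

theorem abs_cost_succ_sub_le (l : List ℕ) (k : ℤ) : |cost m l (k + 1) - cost m l k| ≤ m := by
  induction l generalizing k with
  | nil =>
    rw [cost, cost, ← mul_sub, abs_mul, Nat.abs_cast]
    exact mul_le_of_le_one_right (Nat.cast_nonneg m) (abs_le.2 (by omega))
  | cons n l ih =>
    have := ih k
    have := ih (k + 1)
    rw [cost, cost]
    rw [abs_le] at *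
    omega

theorem cost_convex (l : List ℕ) (k : ℤ) :
    2 * cost m l (k + 1) ≤ cost m l k + cost m l (k + 2) := by
  induction l generalizing k with
  | nil =>
    rw [cost, cost, cost, ← mul_add, mul_left_comm]
    exact mul_le_mul_of_nonneg_left (by omega) (Nat.cast_nonneg m)
  | cons n l ih =>
    have h₀ := ih k
    have h₁ := ih (k + 1)
    rw [cost, cost, cost]
    rw [show k + 1 + 1 = k + 2 by ring, show k + 1 + 2 = k + 2 + 1 by ring] at *
    omega

theorem cost_nonneg {l : List ℕ} (hl : ∀ n ∈ l, 1 ≤ n ∧ n < m) (k : ℤ) : 0 ≤ cost m l k := by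
  induction l generalizing k with
  | nil => rw [cost]; positivity
  | cons n l ih =>
    obtain ⟨hn, hl⟩ := List.forall_mem_cons.1 hl
    have := ih hl k
    have := ih hl (k + 1)
    rw [cost]
    omega

theorem cost_cons_pos {n : ℕ} {l : List ℕ} (hl : ∀ i ∈ n :: l, 1 ≤ i ∧ i < m) (k : ℤ) :
    0 < cost m (n :: l) k := by
  obtain ⟨hn, hl⟩ := List.forall_mem_cons.1 hl
  have := cost_nonneg hl k
  have := cost_nonneg hl (k + 1)
  rw [cost]
  omega

theorem le_cost_add_cost_succ {l : List ℕ} (hl : ∀ n ∈ l, 1 ≤ n ∧ n < m) {k : ℤ}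
    (h : |cost m l (k + 1) - cost m l k| < m) : m ≤ cost m l k + cost m l (k + 1) := by
  induction l generalizing k with
  | nil =>
    have hk : |((k + 1).natAbs - k.natAbs : ℤ)| = 1 := by
      rw [abs_eq zero_le_one]
      omega
    rw [cost, cost, ← mul_sub, abs_mul, Nat.abs_cast, hk, mul_one] at h
    exact absurd h (lt_irrefl _)
  | cons n l ih =>
    obtain ⟨hn, hl⟩ := List.forall_mem_cons.1 hl
    have := ih hl (k := k)
    have := ih hl (k := k + 1)
    have := cost_nonneg hl k
    have := cost_nonneg hl (k + 1)
    have := cost_nonneg hl (k + 1 + 1)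
    rw [cost, cost] at *
    simp only [abs_lt] at *
    omega

theorem cost_replicate_one_of_nonneg (hm : 2 ≤ m) (j : ℕ) {k : ℤ} (hk : 0 ≤ k) :
    cost m (List.replicate j 1) k = m * k + j := by
  induction j generalizing k with
  | zero => simp [cost, hk]
  | succ j ih =>
    rw [List.replicate_succ, cost, ih hk, ih (Int.le_add_one hk), mul_add]
    push_cast
    omega

theorem cost_replicate_one_neg_one (hm : 2 ≤ m) (j : ℕ) :
    cost m (List.replicate (j + 1) 1) (-1) = m - 1 + j := by
  induction j with
  | zero =>
    simp [cost]
    omega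
  | succ j ih =>
    rw [List.replicate_succ, cost, ih, neg_add_cancel, cost_replicate_one_of_nonneg hm _ le_rfl]
    push_cast
    omega

/-- The length of a shortest word for a normal form. -/
def length (m : ℕ) (S : DihedralNF) : ℤ := cost m S.runs S.power

theorem length_mk (k : ℤ) (l : List ℕ) (c : Bool) : length m ⟨k, l, c⟩ = cost m l k := rfl

theorem length_norm (k : ℤ) (l : List ℕ) (c : Bool) : length m (norm k l c) = cost m l k := rfl

theorem length_nonneg {S : DihedralNF} (hS : S.Valid m) : 0 ≤ length m S := cost_nonneg hS.1 _

theorem length_push_nil (s : Bool) (k : ℤ) (c : Bool) :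
    length m (push m s ⟨k, [], c⟩) =
      min (1 + m * (k.natAbs : ℤ)) (m - 1 + m * ((k + 1).natAbs : ℤ)) := by
  rw [push_nil, length_mk, cost, cost, cost, Nat.cast_one]

theorem length_pull_nil (hm : 2 ≤ m) (s : Bool) (k : ℤ) (c : Bool) :
    length m (pull m s ⟨k, [], c⟩) =
      min (m - 1 + m * ((k - 1).natAbs : ℤ)) (1 + m * (k.natAbs : ℤ)) := by
  have hm1 : ((m - 1 : ℕ) : ℤ) = m - 1 := by omega
  rw [pull_nil, length_mk, cost, cost, cost, hm1, sub_add_cancel, sub_sub_cancel]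

section Cons

variable (c : Bool) (k : ℤ) {n : ℕ} (l : List ℕ)

theorem length_push_self (n : ℕ) : length m (push m c ⟨k, n :: l, c⟩) =
    min (1 + cost m (n :: l) k) (m - 1 + cost m (n :: l) (k + 1)) := by
  rw [push_self, length_mk, cost, Nat.cast_one]

theorem length_pull_not (hm : 2 ≤ m) (n : ℕ) : length m (pull m (!c) ⟨k, n :: l, c⟩) =
    min (m - 1 + cost m (n :: l) (k - 1)) (1 + cost m (n :: l) k) := by
  have hm1 : ((m - 1 : ℕ) : ℤ) = m - 1 := by omega
  rw [pull_not, length_mk, cost, hm1, sub_add_cancel, sub_sub_cancel]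

theorem length_push_not : length m (push m (!c) ⟨k, n :: l, c⟩) =
    min (n + 1 + cost m l k) (m - n - 1 + cost m l (k + 1)) := by
  have := abs_le.1 (abs_cost_succ_sub_le (m := m) l k)
  rw [push_not]
  split_ifs
  · rw [length_norm]
    omega
  · rw [length_mk, cost]
    push_cast
    omega

theorem length_pull_self (hn : 1 ≤ n) : length m (pull m c ⟨k, n :: l, c⟩) =
    min (n - 1 + cost m l k) (m - n + 1 + cost m l (k + 1)) := by
  have := abs_le.1 (abs_cost_succ_sub_le (m := m) l k)
  rw [pull_self]
  split_ifs
  · rw [length_norm]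
    omega
  · rw [length_mk, cost]
    push_cast [hn]
    omega

end Cons

variable {S : DihedralNF}

theorem length_push_le (s : Bool) (S : DihedralNF) :
    length m (push m s S) ≤ length m S + 1 := by
  obtain ⟨k, _ | ⟨n, l⟩, c⟩ := S
  · rw [length_push_nil, length_mk, cost]
    omega
  obtain rfl | rfl := Bool.eq_or_eq_not s c
  · rw [length_push_self, length_mk]
    omega
  · rw [length_push_not, length_mk, cost]
    omega

theorem length_pull_le (hm : 2 ≤ m) (hS : S.Valid m) (s : Bool) :
    length m (pull m s S) ≤ length m S + 1 := by
  obtain ⟨k, _ | ⟨n, l⟩, c⟩ := S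
  · rw [length_pull_nil hm, length_mk, cost]
    omega
  obtain rfl | rfl := Bool.eq_or_eq_not s c
  · rw [length_pull_self _ _ _ (valid_cons.1 hS).1.1, length_mk, cost]
    omega
  · rw [length_pull_not _ _ _ hm, length_mk]
    omega

theorem eq_one_of_length_eq_zero (hm : 2 ≤ m) (hS : S.Valid m) (h : length m S = 0) :
    S = ⟨0, [], true⟩ := by
  obtain ⟨k, _ | ⟨n, l⟩, c⟩ := S
  · obtain rfl : c = true := hS.2 rfl
    have hk : k = 0 ∨ m = 0 := by simpa [length_mk, cost, or_comm] using h
    rw [hk.resolve_right (by omega)]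
  · exact absurd h (cost_cons_pos hS.1 k).ne'

theorem exists_length_lt (hm : 2 ≤ m) (hS : S.Valid m) (h : length m S ≠ 0) :
    ∃ s, length m (push m s S) < length m S ∨ length m (pull m s S) < length m S := by
  obtain ⟨k, _ | ⟨n, l⟩, c⟩ := S
  · refine ⟨true, ?_⟩
    rw [length_push_nil, length_pull_nil hm, length_mk, cost]
    rcases lt_trichotomy k 0 with hk | rfl | hk
    · have hk1 : (k.natAbs : ℤ) = (k + 1).natAbs + 1 := by omega
      rw [hk1, mul_add]
      omega
    · simp [length_mk, cost] at h
    · have hk1 : (k.natAbs : ℤ) = (k - 1).natAbs + 1 := by omega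
      rw [hk1, mul_add]
      omega
  · have hn := (valid_cons.1 hS).1
    by_cases hle : n + cost m l k ≤ m - n + cost m l (k + 1)
    · refine ⟨c, .inr ?_⟩
      rw [length_pull_self _ _ _ hn.1, length_mk, cost]
      omega
    · refine ⟨!c, .inl ?_⟩
      rw [length_push_not, length_mk, cost]
      omega

end Length

section FirstLetters

/-- Left multiplication by a generator or its inverse. -/
def act (m : ℕ) (x : Bool × Bool) (S : DihedralNF) : DihedralNF :=
  if x.2 then push m x.1 S else pull m x.1 S

@[simp]
theorem act_true (m : ℕ) (s : Bool) (S : DihedralNF) : act m (s, true) S = push m s S := rfl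

@[simp]
theorem act_false (m : ℕ) (s : Bool) (S : DihedralNF) : act m (s, false) S = pull m s S := rfl

/-- The letter `x` is the first letter of a shortest word for the normal form. -/
def IsFirst (m : ℕ) (x : Bool × Bool) (S : DihedralNF) : Prop :=
  length m (act m (x.1, !x.2) S) < length m S

variable {m : ℕ} (hm : 2 ≤ m)
include hm

theorem IsFirst.of_nil {k : ℤ} {c : Bool} {x : Bool × Bool} (hx : IsFirst m x ⟨k, [], c⟩) :
    (x.2 = true ∧ 1 ≤ k) ∨ (x.2 = false ∧ k ≤ -1) := by
  obtain ⟨s, _ | _⟩ := x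
  · refine .inr ⟨rfl, ?_⟩
    rw [IsFirst, Bool.not_false, act_true, length_push_nil, length_mk, cost] at hx
    by_contra hk
    have hk1 : ((k + 1).natAbs : ℤ) = k.natAbs + 1 := by omega
    rw [hk1, mul_add] at hx
    omega
  · refine .inl ⟨rfl, ?_⟩
    rw [IsFirst, Bool.not_true, act_false, length_pull_nil hm, length_mk, cost] at hx
    by_contra hk
    have hk1 : ((k - 1).natAbs : ℤ) = k.natAbs + 1 := by omega
    rw [hk1, mul_add] at hx
    omega

theorem IsFirst.of_cons {k : ℤ} {n : ℕ} {l : List ℕ} {c : Bool} (hS : Valid m ⟨k, n :: l, c⟩)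
    {x : Bool × Bool} (hx : IsFirst m x ⟨k, n :: l, c⟩) :
    (x = (c, true) ∧ n + cost m l k ≤ m - n + cost m l (k + 1)) ∨
    (x = (!c, false) ∧ m - n + cost m l (k + 1) ≤ n + cost m l k) ∨
    (x = (c, false) ∧ cost m (n :: l) (k + 1) ≤ cost m (n :: l) k - m) ∨
    (x = (!c, true) ∧ cost m (n :: l) (k - 1) ≤ cost m (n :: l) k - m) := by
  have hn := (valid_cons.1 hS).1
  obtain ⟨s, b⟩ := x
  rw [IsFirst] at hx
  obtain rfl | rfl := Bool.eq_or_eq_not s c <;> cases b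
  · refine .inr (.inr (.inl ⟨rfl, ?_⟩))
    rw [Bool.not_false, act_true, length_push_self, length_mk] at hx
    omega
  · refine .inl ⟨rfl, ?_⟩
    rw [Bool.not_true, act_false, length_pull_self _ _ _ hn.1, length_mk, cost] at hx
    omega
  · refine .inr (.inl ⟨rfl, ?_⟩)
    rw [Bool.not_false, act_true, length_push_not, length_mk, cost] at hx
    omega
  · refine .inr (.inr (.inr ⟨rfl, ?_⟩))
    rw [Bool.not_true, act_false, length_pull_not _ _ _ hm, length_mk] at hx
    omega

theorem IsFirst.pair_nil {k : ℤ} {c : Bool} {x y : Bool × Bool} (hx : IsFirst m x ⟨k, [], c⟩)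
    (hy : IsFirst m y ⟨k, [], c⟩) (hxy : x ≠ y) :
    x.1 ≠ y.1 ∧ m ≤ length m ⟨k, [], c⟩ ∧
      (x.2 = true → length m ⟨k, [], c⟩ = m → k = 1) := by
  have hx := hx.of_nil hm
  have hy := hy.of_nil hm
  rw [length_mk, cost]
  refine ⟨fun h => hxy (Prod.ext h ?_), le_mul_of_one_le_right (by omega) (by omega),
    fun hx2 h => ?_⟩
  · rw [Bool.eq_iff_iff]
    grind
  · have hk : k.natAbs = 1 := by
      have := mul_left_cancel₀ (by omega) (h.trans (mul_one _).symm)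
      omega
    have : 1 ≤ k := by simpa [hx2] using hx
    omega

theorem IsFirst.pair_cons {k : ℤ} {n : ℕ} {l : List ℕ} {c : Bool}
    (hS : Valid m ⟨k, n :: l, c⟩) {x y : Bool × Bool} (hx : IsFirst m x ⟨k, n :: l, c⟩)
    (hy : IsFirst m y ⟨k, n :: l, c⟩) (hxy : x ≠ y) :
    x.1 ≠ y.1 ∧ m ≤ length m ⟨k, n :: l, c⟩ ∧
      (x.2 = true → y.2 = true → length m ⟨k, n :: l, c⟩ ≠ m) := by
  obtain ⟨hn, hl⟩ := valid_cons.1 hS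
  have hpos := cost_cons_pos hS.1 (k - 1)
  have hpos' := cost_cons_pos hS.1 (k + 1)
  have hconvex := cost_convex (m := m) (n :: l) (k - 1)
  have hadd := le_cost_add_cost_succ hl (k := k)
  have hcost : cost m (n :: l) k = min (n + cost m l k) (m - n + cost m l (k + 1)) := rfl
  have hcost' : cost m (n :: l) (k + 1) =
      min (n + cost m l (k + 1)) (m - n + cost m l (k + 1 + 1)) := rfl
  have hcost'' : cost m (n :: l) (k - 1) = min (n + cost m l (k - 1)) (m - n + cost m l k) := by
    rw [cost, sub_add_cancel]
  rw [abs_lt] at hadd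
  rw [sub_add_cancel, show k - 1 + 2 = k + 1 by ring] at hconvex
  rw [length_mk]
  rcases hx.of_cons hm hS with ⟨rfl, hx⟩ | ⟨rfl, hx⟩ | ⟨rfl, hx⟩ | ⟨rfl, hx⟩ <;>
  rcases hy.of_cons hm hS with ⟨rfl, hy⟩ | ⟨rfl, hy⟩ | ⟨rfl, hy⟩ | ⟨rfl, hy⟩ <;>
  first
  | exact absurd rfl hxy
  | (exfalso; omega)
  | exact ⟨by simp, by omega, fun h h' => by first | contradiction | omega⟩

variable {S : DihedralNF} (hS : S.Valid m) {x y : Bool × Bool} (hx : IsFirst m x S)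
  (hy : IsFirst m y S) (hxy : x ≠ y)
include hS hx hy hxy

theorem IsFirst.fst_ne_fst : x.1 ≠ y.1 := by
  obtain ⟨k, _ | ⟨n, l⟩, c⟩ := S
  · exact (hx.pair_nil hm hy hxy).1
  · exact (hx.pair_cons hm hS hy hxy).1

theorem IsFirst.le_length : m ≤ length m S := by
  obtain ⟨k, _ | ⟨n, l⟩, c⟩ := S
  · exact (hx.pair_nil hm hy hxy).2.1
  · exact (hx.pair_cons hm hS hy hxy).2.1

theorem IsFirst.eq_garside (hx2 : x.2 = true) (hy2 : y.2 = true) (h : length m S = m) :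
    S = ⟨1, [], true⟩ := by
  obtain ⟨k, _ | ⟨n, l⟩, c⟩ := S
  · obtain rfl : c = true := hS.2 rfl
    rw [(hx.pair_nil hm hy hxy).2.2 hx2 h]
  · exact absurd h ((hx.pair_cons hm hS hy hxy).2.2 hx2 hy2)

omit hS hx hy hxy

theorem IsFirst.fst_eq_of_replicate_one {j : ℕ} {s : Bool}
    (hx : IsFirst m x (norm 0 (List.replicate (j + 1) 1) s)) : x.1 = s := by
  have hS : Valid m (norm 0 (List.replicate (j + 1) 1) s) :=
    valid_norm fun n hn => by rw [List.eq_of_mem_replicate hn]; omega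
  have hcost := cost_replicate_one_neg_one hm j
  have hx := hx.of_cons hm hS
  rw [← List.replicate_succ, zero_add, zero_sub, hcost] at hx
  simp only [cost_replicate_one_of_nonneg hm _ le_rfl,
    cost_replicate_one_of_nonneg hm _ zero_le_one] at hx
  push_cast at hx
  rcases hx with ⟨rfl, -⟩ | ⟨rfl, hx⟩ | ⟨rfl, -⟩ | ⟨rfl, hx⟩
  · rfl
  · omega
  · rfl
  · omega

end FirstLetters

end DihedralNF

namespace DihedralNF

section Evaluation

variable {G : Type*} [Group G] {w : Bool → G} {d : G} {m : ℕ}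

/-- The product of the alternating words of the given lengths, the first of which begins with
`w c`, and of `d ^ k`. -/
def evalRuns (w : Bool → G) (d : G) : List ℕ → Bool → ℤ → G
  | [], _, k => d ^ k
  | n :: l, c, k => altProd n (w c) (w !c) * evalRuns w d l (c ^^ !n.bodd) k

/-- The group element represented by a normal form, for generators `w` and Garside element `d`. -/
def eval (w : Bool → G) (d : G) (S : DihedralNF) : G := evalRuns w d S.runs S.first S.power

theorem eval_norm (k : ℤ) (l : List ℕ) (c : Bool) :
    eval w d (norm k l c) = evalRuns w d l c k := by
  cases l <;> rfl

variable (hd : ∀ s, altProd m (w s) (w !s) = d)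
include hd

theorem gen_mul_garside (s : Bool) : w s * d = d * w (s ^^ m.bodd) := by
  have hd' := hd (!s)
  rw [Bool.not_not] at hd'
  calc w s * d = altProd (m + 1) (w s) (w !s) := by rw [altProd, hd']
    _ = d * w (s ^^ m.bodd) := by
      rw [altProd_succ_right, hd]
      cases m.bodd <;> simp

theorem altProd_mul_garside (n : ℕ) (c : Bool) :
    altProd n (w c) (w !c) * d = d * altProd n (w (c ^^ m.bodd)) (w !(c ^^ m.bodd)) := by
  induction n generalizing c with
  | zero => simp [altProd]
  | succ n ih =>
    have ih := ih (!c)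
    rw [Bool.not_not] at ih
    rw [altProd, mul_assoc, ih, ← mul_assoc, gen_mul_garside hd, mul_assoc, altProd]
    simp

theorem evalRuns_add_one (l : List ℕ) (c : Bool) (k : ℤ) :
    evalRuns w d l c (k + 1) = d * evalRuns w d l (c ^^ m.bodd) k := by
  induction l generalizing c with
  | nil => rw [evalRuns, evalRuns, add_comm, zpow_one_add]
  | cons n l ih =>
    rw [evalRuns, evalRuns, ih, ← mul_assoc, altProd_mul_garside hd, mul_assoc, Bool.xor_right_comm]

theorem eval_push (s : Bool) (S : DihedralNF) : eval w d (push m s S) = w s * eval w d S := by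
  obtain ⟨k, _ | ⟨n, l⟩, c⟩ := S
  · simp [push_nil, eval, evalRuns, altProd]
  obtain rfl | rfl := Bool.eq_or_eq_not s c
  · simp [push_self, eval, evalRuns, altProd]
  rw [push_not]
  split_ifs with h
  · have hn : w (!c) * altProd n (w c) (w !c) = d := by
      rw [← hd (!c), ← h, altProd, Bool.not_not]
    rw [eval_norm, evalRuns_add_one hd, eval, evalRuns, ← mul_assoc, hn, ← h, Nat.bodd_succ]
  · simp [eval, evalRuns, altProd, mul_assoc]

theorem eval_pull (hm : 2 ≤ m) (s : Bool) {S : DihedralNF} (hS : S.Valid m) :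
    eval w d (pull m s S) = (w s)⁻¹ * eval w d S := by
  rw [eq_inv_mul_iff_mul_eq, ← eval_push hd, push_pull hm hS]

end Evaluation

end DihedralNF

/-- `Γ` consists of a single edge, with endpoints `e true` and `e false` and label `m`. -/
structure LabeledGraph.IsEdge {V : Type*} (Γ : LabeledGraph V) (e : Bool ≃ V) (m : ℕ) : Prop where
  adj : ∀ s, Γ.graph.Adj (e s) (e !s)
  label_eq : ∀ s, Γ.label (e s) (e !s) = m

namespace LabeledGraph.IsEdge

open DihedralNF

variable {V : Type*} {Γ : LabeledGraph V} {e : Bool ≃ V} {m : ℕ} (h : Γ.IsEdge e m)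
include h

theorem two_le : 2 ≤ m := h.label_eq true ▸ Γ.two_le_label (h.adj true)

omit h in
theorem eq_apply_not {a b : V} (hab : a ≠ b) : b = e !(e.symm a) := by
  rw [← e.symm_apply_eq]
  exact ((Bool.eq_or_eq_not _ _).resolve_left fun h => hab (e.symm.injective h).symm)

theorem adj_of_ne {a b : V} (hab : a ≠ b) : Γ.graph.Adj a b := by
  simpa [eq_apply_not (e := e) hab] using h.adj (e.symm a)

theorem label_eq_of_ne {a b : V} (hab : a ≠ b) : Γ.label a b = m := by
  simpa [eq_apply_not (e := e) hab] using h.label_eq (e.symm a)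

/-- The action of the dihedral Artin group on normal forms. -/
def permHom : ArtinGroup Γ →* Equiv.Perm {S : DihedralNF // S.Valid m} :=
  lift Γ (fun v => perm h.two_le (e.symm v)) fun a b hab => by
    rw [h.label_eq_of_ne hab.ne, eq_apply_not (e := e) hab.ne, e.symm_apply_apply]
    exact altProd_perm_comm h.two_le (e.symm a)

/-- The normal form of an element of the dihedral Artin group. -/
def normalForm (g : ArtinGroup Γ) : DihedralNF := h.permHom g ⟨⟨0, [], true⟩, valid_one⟩

theorem valid_normalForm (g : ArtinGroup Γ) : (h.normalForm g).Valid m := Subtype.property _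

theorem normalForm_one : h.normalForm 1 = ⟨0, [], true⟩ := by
  rw [normalForm, map_one]
  rfl

theorem normalForm_letter_mul (x : V × Bool) (g : ArtinGroup Γ) :
    h.normalForm (letter Γ x * g) = act m (e.symm x.1, x.2) (h.normalForm g) := by
  rcases x with ⟨v, _ | _⟩ <;> simp [normalForm, permHom, act, perm]

theorem normalForm_gen_pow (s : Bool) (j : ℕ) :
    h.normalForm (artinGen Γ (e s) ^ j) = norm 0 (List.replicate j 1) s := by
  induction j with
  | zero => simp [normalForm_one]
  | succ j ih =>
    rw [pow_succ', ← letter_true, normalForm_letter_mul, letter_true, ih]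
    cases j <;> simp [push_nil, push_self, List.replicate_succ]

theorem eval_normalForm (g : ArtinGroup Γ) :
    eval (fun s => artinGen Γ (e s)) (artinDelta Γ (e true) (e false)) (h.normalForm g) = g := by
  have hd : ∀ s, altProd m (artinGen Γ (e s)) (artinGen Γ (e !s)) =
      artinDelta Γ (e true) (e false) := by
    rintro (_ | _)
    · rw [artinDelta_comm Γ (b := e true) (h.adj false), artinDelta, ← h.label_eq false,
        Bool.not_false]
    · rw [artinDelta, ← h.label_eq true, Bool.not_true]
  induction g using geodesic_induction with
  | one => simp [normalForm_one, eval, evalRuns]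
  | mul x g _ ih =>
    rw [normalForm_letter_mul]
    conv_rhs => rw [← ih]
    rcases x with ⟨v, _ | _⟩
    · rw [act_false, eval_pull hd h.two_le _ (h.valid_normalForm g), e.apply_symm_apply,
        letter_false]
    · rw [act_true, eval_push hd, e.apply_symm_apply, letter_true]

theorem length_normalForm (g : ArtinGroup Γ) : length m (h.normalForm g) = len g := by
  have hnonneg (g : ArtinGroup Γ) : 0 ≤ length m (h.normalForm g) :=
    length_nonneg (h.valid_normalForm g)
  have hlen := len_eq_of_le_of_exists_lt (fun g => (length m (h.normalForm g)).toNat)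
    (by simp [normalForm_one, length_mk, cost]) (fun x g => ?_) (fun g hg => ?_) g
  · rw [hlen, Int.toNat_of_nonneg (hnonneg g)]
  · have hpush := length_push_le (m := m) (e.symm x.1) (h.normalForm g)
    have hpull := length_pull_le h.two_le (h.valid_normalForm g) (e.symm x.1)
    have := hnonneg g
    rcases x with ⟨v, _ | _⟩
    · rw [normalForm_letter_mul, act_false]
      omega
    · rw [normalForm_letter_mul, act_true]
      omega
  · have hne : length m (h.normalForm g) ≠ 0 := fun h0 => hg <| by
      rw [← h.eval_normalForm g, eq_one_of_length_eq_zero h.two_le (h.valid_normalForm g) h0]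
      simp [eval, evalRuns]
    have := hnonneg g
    obtain ⟨s, hs | hs⟩ := exists_length_lt h.two_le (h.valid_normalForm g) hne
    · refine ⟨(e s, true), ?_⟩
      rw [normalForm_letter_mul, e.symm_apply_apply, act_true]
      omega
    · refine ⟨(e s, false), ?_⟩
      rw [normalForm_letter_mul, e.symm_apply_apply, act_false]
      omega

theorem isFirstLetter_iff {x : V × Bool} {g : ArtinGroup Γ} :
    IsFirstLetter x g ↔ IsFirst m (e.symm x.1, x.2) (h.normalForm g) := by
  rw [IsFirstLetter, IsFirst, ← Nat.cast_lt (α := ℤ), ← h.length_normalForm,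
    ← h.length_normalForm, ← letter_not, normalForm_letter_mul]

theorem fst_eq_of_isFirstLetter_pow {x : V × Bool} {v : V} {j : ℕ}
    (hx : IsFirstLetter x (artinGen Γ v ^ j)) : x.1 = v := by
  obtain ⟨s, rfl⟩ := e.surjective v
  cases j with
  | zero => exact absurd hx (not_isFirstLetter_one x)
  | succ j =>
    rw [h.isFirstLetter_iff, normalForm_gen_pow] at hx
    rw [← e.symm_apply_eq]
    exact hx.fst_eq_of_replicate_one h.two_le

theorem fst_eq_of_isFirstLetter_zpow {x : V × Bool} {v : V} {j : ℤ}
    (hx : IsFirstLetter x (artinGen Γ v ^ j)) : x.1 = v := by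
  obtain ⟨j, rfl | rfl⟩ := j.eq_nat_or_neg
  · rw [zpow_natCast] at hx
    exact h.fst_eq_of_isFirstLetter_pow hx
  · have hinv : artinGen Γ v ^ (-j : ℤ) = inversion Γ (artinGen Γ v ^ j) := by simp
    rw [hinv, isFirstLetter_inversion] at hx
    exact h.fst_eq_of_isFirstLetter_pow (x := (x.1, !x.2)) hx

theorem fst_mem_of_isFirstLetter {J : Set V} {x : V × Bool} {g : ArtinGroup Γ}
    (hg : g ∈ standardSubgroup Γ J) (hx : IsFirstLetter x g) : x.1 ∈ J := by
  rcases J.eq_empty_or_nonempty with rfl | ⟨v, hv⟩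
  · obtain rfl : g = 1 := by simpa [standardSubgroup] using hg
    exact absurd hx (not_isFirstLetter_one x)
  by_cases hJ : J ⊆ {v}
  · obtain rfl := hJ.antisymm (Set.singleton_subset_iff.2 hv)
    rw [standardSubgroup, Set.image_singleton, ← Subgroup.zpowers_eq_closure,
      Subgroup.mem_zpowers_iff] at hg
    obtain ⟨j, rfl⟩ := hg
    exact h.fst_eq_of_isFirstLetter_zpow hx
  · obtain ⟨u, hu, huv⟩ := Set.not_subset.1 hJ
    by_cases hxv : x.1 = v
    · exact hxv ▸ hv
    · rwa [eq_apply_not (e := e) (Ne.symm hxv), ← eq_apply_not (e := e) (Ne.symm huv)]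

theorem tameGeodesics : Γ.TameGeodesics := by
  have hpair {x y : V × Bool} (hxy : x ≠ y) :
      ((e.symm x.1, x.2) : Bool × Bool) ≠ (e.symm y.1, y.2) := by
    simpa [Prod.ext_iff] using hxy
  have hne {x y : V × Bool} {g : ArtinGroup Γ} (hx : IsFirstLetter x g) (hy : IsFirstLetter y g)
      (hxy : x ≠ y) : x.1 ≠ y.1 := fun heq => by
    rw [h.isFirstLetter_iff] at hx hy
    exact hx.fst_ne_fst h.two_le (h.valid_normalForm g) hy (hpair hxy) (congrArg e.symm heq)
  refine ⟨fun x y g hx hy hxy => h.adj_of_ne (hne hx hy hxy), fun x y g hx hy hxy => ?_,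
    fun a b g hab ha hb hg => ?_, fun J x g => h.fst_mem_of_isFirstLetter⟩
  · rw [h.label_eq_of_ne (hne hx hy hxy), ← Nat.cast_le (α := ℤ), ← h.length_normalForm]
    rw [h.isFirstLetter_iff] at hx hy
    exact hx.le_length h.two_le (h.valid_normalForm g) hy (hpair hxy)
  · have eq_delta {g : ArtinGroup Γ} (ha : IsFirstLetter (a, true) g)
        (hb : IsFirstLetter (b, true) g) (hg : len g = Γ.label a b) :
        h.normalForm g = ⟨1, [], true⟩ := by
      rw [h.isFirstLetter_iff] at ha hb
      refine ha.eq_garside h.two_le (h.valid_normalForm g) hb ?_ rfl rfl ?_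
      · exact hpair fun hab' => hab.ne (congrArg Prod.fst hab')
      · rw [h.length_normalForm, hg, h.label_eq_of_ne hab.ne]
    obtain ⟨ha', hb'⟩ := isFirstLetter_artinDelta hab
    rw [← h.eval_normalForm g, ← h.eval_normalForm (artinDelta Γ a b), eq_delta ha hb hg,
      eq_delta ha' hb' (len_artinDelta a b)]

end LabeledGraph.IsEdge

/-! ### Word length in amalgamated products -/

section NormalWordLength

open Monoid Monoid.PushoutI

variable {ι H : Type*} {G : ι → Type*} [∀ i, Group (G i)] [Group H] {φ : ∀ i, H →* G i}
  {d : NormalWord.Transversal φ}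

/-- Length functions on the factors of an amalgam for which every transversal element is the
unique shortest element of its coset, at additive cost. -/
structure GatedLengths (d : NormalWord.Transversal φ) (lH : H → ℕ) (lG : ∀ i, G i → ℕ) : Prop where
  eq_zero_iff : ∀ {i g}, lG i g = 0 ↔ g = 1
  map_mul : ∀ {i h t}, t ∈ d.set i → lG i (φ i h * t) = lH h + lG i t

/-- The total length of the letters of a word. -/
def lettersLen (lG : ∀ i, G i → ℕ) (w : CoprodI.Word G) : ℕ :=
  (w.toList.map fun p => lG p.1 p.2).sum

/-- The length of a normal word, as the sum of the lengths of its head and of its letters. -/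
def normalLen (lH : H → ℕ) (lG : ∀ i, G i → ℕ) (w : NormalWord d) : ℕ :=
  lH w.head + lettersLen lG w.toWord

variable [DecidableEq ι] [∀ i, DecidableEq (G i)]

/-- The part of a normal word lying in the `i`-th factor. -/
noncomputable def localHead (i : ι) (w : NormalWord d) : G i := (NormalWord.equivPair i w).head

/-- The total length of the letters of a normal word outside its part in the `i`-th factor. -/
noncomputable def localRest (lG : ∀ i, G i → ℕ) (i : ι) (w : NormalWord d) : ℕ :=
  lettersLen lG (NormalWord.equivPair i w).tail

theorem equivPair_head_eq_one_or_mem (i : ι) (w : CoprodI.Word G) :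
    (CoprodI.Word.equivPair i w).head = 1 ∨
      ⟨i, (CoprodI.Word.equivPair i w).head⟩ ∈ w.toList := by
  rw [CoprodI.Word.equivPair_head]
  split_ifs with h
  · obtain ⟨hne, rfl⟩ := h
    exact .inr (List.head_mem hne)
  · exact .inl rfl

theorem exists_forall_ne_equivPair_head_eq_one [Nonempty ι] (w : CoprodI.Word G) :
    ∃ i, ∀ j, j ≠ i → (CoprodI.Word.equivPair j w).head = 1 := by
  obtain ⟨i, hi⟩ : ∃ i, ∀ j, j ≠ i → w.fstIdx ≠ some j := by
    cases hw : w.fstIdx with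
    | none => exact ⟨Classical.arbitrary ι, by simp⟩
    | some i => exact ⟨i, fun j hj => by simpa using hj.symm⟩
  exact ⟨i, fun j hj => by rw [CoprodI.Word.equivPair_eq_of_fstIdx_ne (hi j hj)]⟩

theorem eq_empty_of_equivPair_head_eq_one {w : CoprodI.Word G}
    (h : ∀ i, (CoprodI.Word.equivPair i w).head = 1) : w = CoprodI.Word.empty := by
  by_contra hw
  obtain ⟨i, hi⟩ : ∃ i, w.fstIdx = some i :=
    Option.ne_none_iff_exists'.1 fun hn => hw <| CoprodI.Word.ext <| by
      simpa [CoprodI.Word.fstIdx] using hn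
  have htail : CoprodI.Word.rcons (CoprodI.Word.equivPair i w) = w := by
    rw [← CoprodI.Word.equivPair_symm, Equiv.symm_apply_apply]
  rw [CoprodI.Word.rcons, dif_pos (h i)] at htail
  exact (CoprodI.Word.equivPair i w).fstIdx_ne (htail.symm ▸ hi)

theorem localHead_eq (i : ι) (w : NormalWord d) :
    localHead i w = φ i w.head * (CoprodI.Word.equivPair i w.toWord).head := by
  simp only [localHead, NormalWord.equivPair, Equiv.coe_fn_mk]
  rw [CoprodI.Word.equivPair_smul_same]

theorem equivPair_head_mem_transversal (i : ι) (w : NormalWord d) :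
    (CoprodI.Word.equivPair i w.toWord).head ∈ d.set i := by
  obtain h | h := equivPair_head_eq_one_or_mem i w.toWord
  · exact h ▸ d.one_mem i
  · exact w.normalized _ _ h

theorem exists_forall_ne_localHead_mem_range [Nonempty ι] (w : NormalWord d) :
    ∃ i, ∀ j, j ≠ i → localHead j w ∈ (φ j).range := by
  refine (exists_forall_ne_equivPair_head_eq_one w.toWord).imp fun i h j hj => ?_
  rw [localHead_eq, h j hj, mul_one]
  exact ⟨_, rfl⟩

namespace GatedLengths

variable {lH : H → ℕ} {lG : ∀ i, G i → ℕ} (hl : GatedLengths d lH lG)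
include hl

omit [DecidableEq ι] in
theorem lettersLen_rcons {i : ι} (p : CoprodI.Word.Pair G i) :
    lettersLen lG (CoprodI.Word.rcons p) = lG i p.head + lettersLen lG p.tail := by
  rw [CoprodI.Word.rcons]
  split_ifs with h
  · rw [h, hl.eq_zero_iff.2 rfl, zero_add]
  · simp [CoprodI.Word.cons, lettersLen]

theorem normalLen_rcons {i : ι} (p : NormalWord.Pair d i) :
    normalLen lH lG (NormalWord.rcons i p) = lG i p.head + lettersLen lG p.tail := by
  simp only [normalLen, NormalWord.rcons]
  rw [CoprodI.Word.equivPair_symm, hl.lettersLen_rcons, ← add_assoc,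
    ← hl.map_mul (Subtype.coe_prop _), MonoidHom.apply_ofInjective_symm,
    Subgroup.IsComplement.equiv_fst_mul_equiv_snd]

theorem normalLen_of_smul {i : ι} (g : G i) (w : NormalWord d) :
    normalLen lH lG (of (φ := φ) i g • w) = lG i (g * localHead i w) + localRest lG i w := by
  rw [NormalWord.summand_smul_def]
  exact hl.normalLen_rcons _

theorem eq_empty_of_localHead_eq_one [Nonempty ι] {w : NormalWord d}
    (h : ∀ i, localHead i w = 1) : w = NormalWord.empty := by
  have hhead i : (CoprodI.Word.equivPair i w.toWord).head = 1 := by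
    have hlen := hl.map_mul (h := w.head) (equivPair_head_mem_transversal i w)
    rw [← localHead_eq, h i, hl.eq_zero_iff.2 rfl] at hlen
    exact hl.eq_zero_iff.1 (by omega)
  obtain ⟨i⟩ := ‹Nonempty ι›
  refine NormalWord.ext (d.injective i ?_) ?_
  · rw [NormalWord.empty, map_one, ← h i, localHead_eq, hhead, mul_one]
  · rw [eq_empty_of_equivPair_head_eq_one hhead, NormalWord.empty]

end GatedLengths

/-- A normal word whose head and letters lie in prescribed subgroups. -/
structure WordIn (KH : Subgroup H) (K : ∀ i, Subgroup (G i)) (w : NormalWord d) : Prop where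
  head_mem : w.head ∈ KH
  letter_mem : ∀ i g, ⟨i, g⟩ ∈ w.toList → g ∈ K i

namespace WordIn

variable {KH : Subgroup H} {K : ∀ i, Subgroup (G i)} (hK : ∀ i, ∀ h ∈ KH, φ i h ∈ K i)
include hK

theorem localHead_mem {w : NormalWord d} (hw : WordIn KH K w) (i : ι) : localHead i w ∈ K i := by
  rw [localHead_eq]
  refine mul_mem (hK i _ hw.head_mem) ?_
  obtain h | h := equivPair_head_eq_one_or_mem i w.toWord
  · exact h ▸ one_mem _
  · exact hw.letter_mem _ _ h

theorem of_smul (hdec : ∀ i h t, t ∈ d.set i → φ i h * t ∈ K i → h ∈ KH ∧ t ∈ K i)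
    {w : NormalWord d} (hw : WordIn KH K w) (i : ι) {g : G i} (hg : g ∈ K i) :
    WordIn KH K (of (φ := φ) i g • w) := by
  set y := (d.compl i).equiv (g * localHead i w)
  have hmul : φ i ((MonoidHom.ofInjective (d.injective i)).symm y.1) * y.2 = g * localHead i w := by
    rw [MonoidHom.apply_ofInjective_symm, Subgroup.IsComplement.equiv_fst_mul_equiv_snd]
  have hy := hdec i _ _ (Subtype.coe_prop _)
    (hmul.symm ▸ mul_mem hg (hw.localHead_mem hK i))
  have htail : (NormalWord.equivPair i w).tail = (CoprodI.Word.equivPair i w.toWord).tail := by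
    simp only [NormalWord.equivPair, Equiv.coe_fn_mk]
    rw [CoprodI.Word.equivPair_smul_same]
  rw [NormalWord.summand_smul_def]
  refine ⟨hy.1, fun j t ht => ?_⟩
  change ⟨j, t⟩ ∈ ((CoprodI.Word.equivPair i).symm _).toList at ht
  rw [CoprodI.Word.equivPair_symm, CoprodI.Word.mem_rcons_iff] at ht
  obtain ht | ⟨-, rfl, rfl⟩ := ht
  · exact hw.letter_mem _ _ (CoprodI.Word.mem_of_mem_equivPair_tail _ (htail ▸ ht))
  · exact hy.2

end WordIn

end NormalWordLength

namespace ArtinGroup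

section Gate

variable {V : Type*} (Γ : LabeledGraph V) {I : Type*} (c : I → V)

/-- The homomorphism from the free group on a family of vertices. -/
def freeHom : FreeGroup I →* ArtinGroup Γ := FreeGroup.lift fun a => artinGen Γ (c a)

@[simp]
theorem freeHom_of (a : I) : freeHom Γ c (FreeGroup.of a) = artinGen Γ (c a) := by
  simp [freeHom]

theorem freeHom_mk_cons (x : I × Bool) (L : List (I × Bool)) :
    freeHom Γ c (FreeGroup.mk (x :: L)) =
      letter Γ (c x.1, x.2) * freeHom Γ c (FreeGroup.mk L) := by
  rw [← List.singleton_append, ← FreeGroup.mul_mk, map_mul]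
  rcases x with ⟨a, _ | _⟩ <;> simp [freeHom]

theorem freeHom_mk_singleton (x : I × Bool) :
    freeHom Γ c (FreeGroup.mk [x]) = letter Γ (c x.1, x.2) := by
  rw [freeHom_mk_cons, ← FreeGroup.one_eq_mk, map_one, mul_one]

/-- No vertex of the family `c` is the first letter of a geodesic for `t`, so that `t` is a
shortest element of its coset of the subgroup generated by the family. -/
def IsGate (t : ArtinGroup Γ) : Prop := ∀ a s, ¬ IsFirstLetter (c a, s) t

theorem isGate_one : IsGate Γ c 1 := fun _ _ => not_isFirstLetter_one _

variable {Γ c}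

theorem letter_mem_standardSubgroup {J : Set V} {x : V × Bool} (hx : x.1 ∈ J) :
    letter Γ x ∈ standardSubgroup Γ J := by
  have hgen : artinGen Γ x.1 ∈ standardSubgroup Γ J :=
    Subgroup.subset_closure (Set.mem_image_of_mem _ hx)
  rcases x with ⟨v, _ | _⟩
  · rw [letter_false]
    exact inv_mem hgen
  · rwa [letter_true]

theorem mem_standardSubgroup_univ (g : ArtinGroup Γ) : g ∈ standardSubgroup Γ Set.univ := by
  rw [standardSubgroup, Set.image_univ, closure_range_gen]
  trivial

theorem freeHom_mem {J : Set V} {w : FreeGroup I}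
    (hw : w ∈ Subgroup.closure (FreeGroup.of '' (c ⁻¹' J))) :
    freeHom Γ c w ∈ standardSubgroup Γ J := by
  suffices Subgroup.closure (FreeGroup.of '' (c ⁻¹' J)) ≤
      (standardSubgroup Γ J).comap (freeHom Γ c) from this hw
  rw [Subgroup.closure_le]
  rintro _ ⟨a, ha, rfl⟩
  rw [SetLike.mem_coe, Subgroup.mem_comap, freeHom_of]
  exact Subgroup.subset_closure ⟨_, ha, rfl⟩

theorem len_freeHom_mk_mul_le (L : List (I × Bool)) (t : ArtinGroup Γ) :
    len (freeHom Γ c (FreeGroup.mk L) * t) ≤ L.length + len t := by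
  induction L with
  | nil => simp [← FreeGroup.one_eq_mk]
  | cons x L ih =>
    rw [freeHom_mk_cons, mul_assoc, List.length_cons]
    have := len_letter_mul_le (c x.1, x.2) (freeHom Γ c (FreeGroup.mk L) * t)
    omega

theorem exists_isGate_freeHom_mul (hΓ : Γ.TameGeodesics) {J : Set V} {g : ArtinGroup Γ}
    (hg : g ∈ standardSubgroup Γ J) :
    ∃ w t, IsGate Γ c t ∧ g = freeHom Γ c w * t ∧ t ∈ standardSubgroup Γ J ∧
      w ∈ Subgroup.closure (FreeGroup.of '' (c ⁻¹' J)) := by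
  induction hn : len g using Nat.strong_induction_on generalizing g with
  | _ n ih =>
    by_cases hgate : IsGate Γ c g
    · exact ⟨1, g, hgate, by simp, hg, one_mem _⟩
    · obtain ⟨a, s, hfirst⟩ : ∃ a s, IsFirstLetter (c a, s) g := by
        simpa only [IsGate, not_forall, not_not] using hgate
      have ha : c a ∈ J := hΓ.mem hg hfirst
      obtain ⟨w, t, ht, hwt, htJ, hw⟩ := ih _ (lt_of_lt_of_eq hfirst hn)
        (mul_mem (inv_mem (letter_mem_standardSubgroup (x := (c a, s)) ha)) hg) rfl
      refine ⟨FreeGroup.mk [(a, s)] * w, t, ht, ?_, htJ, mul_mem ?_ hw⟩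
      · rw [map_mul, mul_assoc, ← hwt, freeHom_mk_singleton, mul_inv_cancel_left]
      · have hof : FreeGroup.of a ∈ Subgroup.closure (FreeGroup.of '' (c ⁻¹' J)) :=
          Subgroup.subset_closure ⟨a, ha, rfl⟩
        cases s
        · exact inv_mem hof
        · exact hof

namespace IsGate

variable {t t' : ArtinGroup Γ} (hΓ : Γ.TameGeodesics) (hc : Function.Injective c)
  (hind : ∀ a b, ¬ Γ.graph.Adj (c a) (c b))
include hΓ hc hind

theorem not_isFirstLetter_of_isReduced (ht : IsGate Γ c t) {x : I × Bool} {L : List (I × Bool)}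
    (hL : FreeGroup.IsReduced (x :: L))
    (hlen : len (freeHom Γ c (FreeGroup.mk L) * t) = L.length + len t) :
    ¬ IsFirstLetter (c x.1, !x.2) (freeHom Γ c (FreeGroup.mk L) * t) := by
  intro hfirst
  obtain _ | ⟨y, L⟩ := L
  · rw [← FreeGroup.one_eq_mk, map_one, one_mul] at hfirst
    exact ht _ _ hfirst
  have hy : IsFirstLetter (c y.1, y.2) (freeHom Γ c (FreeGroup.mk (y :: L)) * t) := by
    rw [IsFirstLetter, hlen, freeHom_mk_cons, mul_assoc, inv_mul_cancel_left, List.length_cons]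
    have := len_freeHom_mk_mul_le (c := c) L t
    omega
  by_cases hxy : (c x.1, !x.2) = (c y.1, y.2)
  · rw [FreeGroup.IsReduced, List.isChain_cons_cons] at hL
    obtain ⟨hfst, hsnd⟩ := Prod.mk.inj hxy
    exact Bool.not_ne_self _ (hsnd.trans (hL.1 (hc hfst)).symm)
  · exact hind _ _ (hΓ.adj hfirst hy hxy)

theorem len_freeHom_mk_mul (ht : IsGate Γ c t) {L : List (I × Bool)} (hL : FreeGroup.IsReduced L) :
    len (freeHom Γ c (FreeGroup.mk L) * t) = L.length + len t := by
  induction L with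
  | nil => simp [← FreeGroup.one_eq_mk]
  | cons x L ih =>
    have hlen := ih (hL.infix ⟨[x], [], by simp⟩)
    have hx := len_of_not_isFirstLetter
      (ht.not_isFirstLetter_of_isReduced hΓ hc hind hL hlen)
    rw [letter_not Γ (c x.1, x.2), inv_inv, hlen] at hx
    rw [freeHom_mk_cons, mul_assoc, hx, List.length_cons]
    omega

theorem len_freeHom_mul [DecidableEq I] (ht : IsGate Γ c t) (w : FreeGroup I) :
    len (freeHom Γ c w * t) = w.norm + len t := by
  conv_lhs => rw [← FreeGroup.mk_toWord (x := w)]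
  exact ht.len_freeHom_mk_mul hΓ hc hind FreeGroup.isReduced_toWord

theorem unique {w w' : FreeGroup I} (ht : IsGate Γ c t) (ht' : IsGate Γ c t')
    (h : freeHom Γ c w * t = freeHom Γ c w' * t') : w = w' ∧ t = t' := by
  classical
  have hl := ht.len_freeHom_mul hΓ hc hind (w'⁻¹ * w)
  have hl' := ht'.len_freeHom_mul hΓ hc hind (w⁻¹ * w')
  rw [map_mul, map_inv, mul_assoc, h, inv_mul_cancel_left] at hl
  rw [map_mul, map_inv, mul_assoc, ← h, inv_mul_cancel_left] at hl'
  have hnorm : (w'⁻¹ * w).norm = 0 := by omega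
  obtain rfl := inv_mul_eq_one.1 (FreeGroup.norm_eq_zero.1 hnorm)
  exact ⟨rfl, mul_left_cancel h⟩

theorem mem_of_freeHom_mul_mem {J : Set V} {w : FreeGroup I} (ht : IsGate Γ c t)
    (h : freeHom Γ c w * t ∈ standardSubgroup Γ J) :
    w ∈ Subgroup.closure (FreeGroup.of '' (c ⁻¹' J)) ∧ t ∈ standardSubgroup Γ J := by
  obtain ⟨w', t', ht', hwt, htJ, hw⟩ := exists_isGate_freeHom_mul (c := c) hΓ h
  obtain ⟨rfl, rfl⟩ := ht.unique hΓ hc hind ht' hwt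
  exact ⟨hw, htJ⟩

end IsGate

variable (hΓ : Γ.TameGeodesics) (hc : Function.Injective c)
  (hind : ∀ a b, ¬ Γ.graph.Adj (c a) (c b))
include hΓ hc hind

theorem freeHom_injective : Function.Injective (freeHom Γ c) := fun _ _ h =>
  ((isGate_one Γ c).unique hΓ hc hind (isGate_one Γ c) (congrArg (· * 1) h)).1

theorem isComplement_setOf_isGate :
    Subgroup.IsComplement ((freeHom Γ c).range : Set (ArtinGroup Γ)) {t | IsGate Γ c t} := by
  constructor
  · rintro ⟨⟨_, w, rfl⟩, t, ht⟩ ⟨⟨_, w', rfl⟩, t', ht'⟩ h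
    obtain ⟨rfl, rfl⟩ := IsGate.unique hΓ hc hind ht ht' h
    rfl
  · intro g
    obtain ⟨w, t, ht, rfl, -⟩ := exists_isGate_freeHom_mul (c := c) hΓ (mem_standardSubgroup_univ g)
    exact ⟨(⟨_, w, rfl⟩, ⟨t, ht⟩), rfl⟩

end Gate

end ArtinGroup

/-- The full labeled subgraph on a set of vertices. -/
def LabeledGraph.induce {V : Type*} (Γ : LabeledGraph V) (S : Set V) : LabeledGraph S where
  graph := Γ.graph.induce S
  label a b := Γ.label a b
  label_symm a b := Γ.label_symm a b
  two_le_label _ _ h := Γ.two_le_label h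

namespace ArtinGroup

variable {V : Type*} (Γ : LabeledGraph V) (S : Set V)

/-- The homomorphism of Artin groups induced by the inclusion of a full subgraph. -/
def inclusion : ArtinGroup (Γ.induce S) →* ArtinGroup Γ :=
  lift _ (fun v => artinGen Γ v) fun _ _ h => altProd_gen_comm Γ h

@[simp]
theorem inclusion_gen (v : S) : inclusion Γ S (artinGen (Γ.induce S) v) = artinGen Γ v :=
  lift_gen ..

@[simp]
theorem inclusion_letter (x : S × Bool) :
    inclusion Γ S (letter (Γ.induce S) x) = letter Γ (x.1, x.2) := by
  rcases x with ⟨v, _ | _⟩ <;> simp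

theorem inclusion_artinDelta (a b : S) :
    inclusion Γ S (artinDelta (Γ.induce S) a b) = artinDelta Γ a b := by
  rw [artinDelta, map_altProd, inclusion_gen, inclusion_gen]
  rfl

end ArtinGroup

/-- A covering of a labeled graph by full subgraphs with tame geodesics, pairwise meeting inside a
common set of vertices which spans no edge. The Artin group is then the amalgam of those of the
pieces along a free group. -/
structure LabeledGraph.TameSplitting {V : Type*} (Γ : LabeledGraph V) (ι : Type*) where
  piece : ι → Set V
  common : Set V
  common_subset : ∀ i, common ⊆ piece i
  inter_subset : ∀ ⦃i j⦄, i ≠ j → piece i ∩ piece j ⊆ common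
  exists_mem : ∀ v, ∃ i, v ∈ piece i
  exists_mem_of_adj : ∀ ⦃a b⦄, Γ.graph.Adj a b → ∃ i, a ∈ piece i ∧ b ∈ piece i
  indep : ∀ a ∈ common, ∀ b ∈ common, ¬ Γ.graph.Adj a b
  tame : ∀ i, (Γ.induce (piece i)).TameGeodesics

namespace LabeledGraph.TameSplitting

open Monoid

variable {V ι : Type*} {Γ : LabeledGraph V} (P : Γ.TameSplitting ι)

/-- The inclusion of the common part into a piece. -/
def incl (i : ι) (a : P.common) : P.piece i := ⟨a, P.common_subset i a.2⟩

/-- The homomorphisms along which the Artin groups of the pieces are amalgamated. -/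
def glue (i : ι) : FreeGroup P.common →* ArtinGroup (Γ.induce (P.piece i)) :=
  freeHom _ (P.incl i)

theorem incl_injective (i : ι) : Function.Injective (P.incl i) := fun _ _ h =>
  Subtype.ext (congrArg (fun v : P.piece i => (v : V)) h)

theorem incl_indep (i : ι) (a b : P.common) :
    ¬ (Γ.induce (P.piece i)).graph.Adj (P.incl i a) (P.incl i b) :=
  P.indep a a.2 b b.2

/-- The transversals consisting of gates. -/
def transversal : PushoutI.NormalWord.Transversal P.glue where
  injective i := freeHom_injective (P.tame i) (P.incl_injective i) (P.incl_indep i)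
  set i := {t | IsGate _ (P.incl i) t}
  one_mem _ := isGate_one _ _
  compl i := isComplement_setOf_isGate (P.tame i) (P.incl_injective i) (P.incl_indep i)

theorem of_gen_eq_base {v : V} {i : ι} (hi : v ∈ P.piece i) (hv : v ∈ P.common) :
    PushoutI.of (φ := P.glue) i (artinGen (Γ.induce (P.piece i)) ⟨v, hi⟩) =
      PushoutI.base P.glue (FreeGroup.of ⟨v, hv⟩) := by
  rw [← PushoutI.of_apply_eq_base P.glue i, glue, freeHom_of, incl]

theorem of_gen_eq {v : V} {i j : ι} (hi : v ∈ P.piece i) (hj : v ∈ P.piece j) :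
    PushoutI.of (φ := P.glue) i (artinGen (Γ.induce (P.piece i)) ⟨v, hi⟩) =
      PushoutI.of (φ := P.glue) j (artinGen (Γ.induce (P.piece j)) ⟨v, hj⟩) := by
  obtain rfl | hij := eq_or_ne i j
  · rfl
  · have hv : v ∈ P.common := P.inter_subset hij ⟨hi, hj⟩
    rw [P.of_gen_eq_base hi hv, P.of_gen_eq_base hj hv]

/-- The comparison map to the amalgam. -/
noncomputable def toPushout : ArtinGroup Γ →* PushoutI P.glue :=
  lift Γ (fun v => PushoutI.of (P.exists_mem v).choose
    (artinGen (Γ.induce (P.piece (P.exists_mem v).choose)) ⟨v, (P.exists_mem v).choose_spec⟩))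
    fun a b hab => by
      obtain ⟨i, ha, hb⟩ := P.exists_mem_of_adj hab
      rw [P.of_gen_eq _ ha, P.of_gen_eq _ hb, ← map_altProd, ← map_altProd]
      exact congrArg _ (altProd_gen_comm (Γ.induce (P.piece i)) (a := ⟨a, ha⟩) (b := ⟨b, hb⟩) hab)

theorem toPushout_gen {v : V} {i : ι} (hi : v ∈ P.piece i) :
    P.toPushout (artinGen Γ v) = PushoutI.of i (artinGen (Γ.induce (P.piece i)) ⟨v, hi⟩) := by
  rw [toPushout, lift_gen]
  exact P.of_gen_eq _ _

theorem toPushout_inclusion (i : ι) (y : ArtinGroup (Γ.induce (P.piece i))) :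
    P.toPushout (inclusion Γ (P.piece i) y) = PushoutI.of i y := by
  have h : P.toPushout.comp (inclusion Γ (P.piece i)) = PushoutI.of (φ := P.glue) i :=
    hom_ext _ fun v => by rw [MonoidHom.comp_apply, inclusion_gen, P.toPushout_gen v.2]
  exact DFunLike.congr_fun h y

/-- The homomorphism from the amalgam induced by the inclusions of the pieces. -/
def ofPushout : PushoutI P.glue →* ArtinGroup Γ :=
  PushoutI.lift (fun i => inclusion Γ (P.piece i)) (freeHom Γ Subtype.val) fun i =>
    FreeGroup.ext_hom _ _ fun a => by
      rw [MonoidHom.comp_apply, glue, freeHom_of, freeHom_of, inclusion_gen, incl]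

theorem ofPushout_toPushout (g : ArtinGroup Γ) : P.ofPushout (P.toPushout g) = g := by
  have h : P.ofPushout.comp P.toPushout = MonoidHom.id _ := hom_ext _ fun v => by
    obtain ⟨i, hi⟩ := P.exists_mem v
    rw [MonoidHom.comp_apply, P.toPushout_gen hi, ofPushout, PushoutI.lift_of, inclusion_gen,
      MonoidHom.id_apply]
  exact DFunLike.congr_fun h g

section NormalForm

open scoped Classical

/-- The normal form of an element in the amalgam. -/
noncomputable def normalForm (g : ArtinGroup Γ) : PushoutI.NormalWord P.transversal :=
  P.toPushout g • PushoutI.NormalWord.empty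

/-- The part of the normal form lying in one of the pieces. -/
noncomputable def headIn (i : ι) (g : ArtinGroup Γ) : ArtinGroup (Γ.induce (P.piece i)) :=
  localHead i (P.normalForm g)

/-- The length of the part of the normal form outside one of the pieces. -/
noncomputable def restLen (i : ι) (g : ArtinGroup Γ) : ℕ :=
  localRest (fun _ => len) i (P.normalForm g)

/-- The length of the normal form. -/
noncomputable def normalFormLen (g : ArtinGroup Γ) : ℕ :=
  normalLen FreeGroup.norm (fun _ => len) (P.normalForm g)

theorem normalForm_one : P.normalForm 1 = PushoutI.NormalWord.empty := by
  rw [normalForm, map_one, one_smul]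

theorem normalForm_inclusion_mul (i : ι) (y : ArtinGroup (Γ.induce (P.piece i)))
    (g : ArtinGroup Γ) : P.normalForm (inclusion Γ (P.piece i) y * g) =
      PushoutI.of (φ := P.glue) i y • P.normalForm g := by
  rw [normalForm, map_mul, toPushout_inclusion, mul_smul, normalForm]

theorem gatedLengths : GatedLengths P.transversal FreeGroup.norm (fun _ => len) where
  eq_zero_iff := ⟨eq_one_of_len_eq_zero, fun h => h ▸ len_one⟩
  map_mul {i h _} ht :=
    IsGate.len_freeHom_mul (P.tame i) (P.incl_injective i) (P.incl_indep i) ht h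

theorem normalFormLen_one : P.normalFormLen 1 = 0 := by
  simp [normalFormLen, P.normalForm_one, normalLen, PushoutI.NormalWord.empty, lettersLen,
    CoprodI.Word.empty]

theorem normalFormLen_inclusion_mul (i : ι) (y : ArtinGroup (Γ.induce (P.piece i)))
    (g : ArtinGroup Γ) :
    P.normalFormLen (inclusion Γ (P.piece i) y * g) = len (y * P.headIn i g) + P.restLen i g := by
  rw [normalFormLen, normalForm_inclusion_mul, P.gatedLengths.normalLen_of_smul, headIn, restLen]

theorem normalFormLen_eq (i : ι) (g : ArtinGroup Γ) :
    P.normalFormLen g = len (P.headIn i g) + P.restLen i g := by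
  simpa using P.normalFormLen_inclusion_mul i 1 g

theorem normalFormLen_letter_mul {i : ι} {v : V} (hv : v ∈ P.piece i) (s : Bool)
    (g : ArtinGroup Γ) : P.normalFormLen (letter Γ (v, s) * g) =
      len (letter (Γ.induce (P.piece i)) (⟨v, hv⟩, s) * P.headIn i g) + P.restLen i g := by
  rw [← P.normalFormLen_inclusion_mul, inclusion_letter]

theorem glue_mem {J : Set V} (i : ι) (w : FreeGroup P.common)
    (hw : w ∈ Subgroup.closure (FreeGroup.of '' ((fun a : P.common => (a : V)) ⁻¹' J))) :
    P.glue i w ∈ standardSubgroup (Γ.induce (P.piece i)) (Subtype.val ⁻¹' J) :=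
  freeHom_mem (c := P.incl i) hw

theorem mem_of_glue_mul_mem {J : Set V} (i : ι) (w : FreeGroup P.common)
    (t : ArtinGroup (Γ.induce (P.piece i))) (ht : t ∈ P.transversal.set i)
    (h : P.glue i w * t ∈ standardSubgroup (Γ.induce (P.piece i)) (Subtype.val ⁻¹' J)) :
    w ∈ Subgroup.closure (FreeGroup.of '' ((fun a : P.common => (a : V)) ⁻¹' J)) ∧
      t ∈ standardSubgroup (Γ.induce (P.piece i)) (Subtype.val ⁻¹' J) :=
  IsGate.mem_of_freeHom_mul_mem (c := P.incl i) (J := Subtype.val ⁻¹' J) (w := w)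
    (P.tame i) (P.incl_injective i) (P.incl_indep i) ht h

/-- The constituents of the normal form of `g` are products of generators in `J`. -/
def NormalFormIn (J : Set V) (g : ArtinGroup Γ) : Prop :=
  WordIn (Subgroup.closure (FreeGroup.of '' ((fun a : P.common => (a : V)) ⁻¹' J)))
    (fun i => standardSubgroup (Γ.induce (P.piece i)) (Subtype.val ⁻¹' J)) (P.normalForm g)

theorem NormalFormIn.letter_mul {J : Set V} {x : V × Bool} {g : ArtinGroup Γ}
    (hg : P.NormalFormIn J g) (hx : x.1 ∈ J) : P.NormalFormIn J (letter Γ x * g) := by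
  obtain ⟨i, hi⟩ := P.exists_mem x.1
  have hletter : letter Γ x = inclusion Γ (P.piece i) (letter _ (⟨x.1, hi⟩, x.2)) := by simp
  rw [NormalFormIn, hletter, normalForm_inclusion_mul]
  exact WordIn.of_smul P.glue_mem P.mem_of_glue_mul_mem hg i (letter_mem_standardSubgroup hx)

theorem normalFormIn_of_mem {J : Set V} {g : ArtinGroup Γ} (hg : g ∈ standardSubgroup Γ J) :
    P.NormalFormIn J g := by
  induction hg using Subgroup.closure_induction_left with
  | one =>
    rw [NormalFormIn, P.normalForm_one]
    exact ⟨one_mem _, by simp [PushoutI.NormalWord.empty, CoprodI.Word.empty]⟩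
  | mul_left x hx y _ ih =>
    obtain ⟨v, hv, rfl⟩ := hx
    simpa using ih.letter_mul P (x := (v, true)) hv
  | inv_mul_cancel x hx y _ ih =>
    obtain ⟨v, hv, rfl⟩ := hx
    simpa using ih.letter_mul P (x := (v, false)) hv

theorem headIn_mem {J : Set V} {g : ArtinGroup Γ} (hg : g ∈ standardSubgroup Γ J) (i : ι) :
    P.headIn i g ∈ standardSubgroup (Γ.induce (P.piece i)) (Subtype.val ⁻¹' J) :=
  WordIn.localHead_mem P.glue_mem (P.normalFormIn_of_mem hg) i

variable [Nonempty ι]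

theorem exists_headIn_ne_one {g : ArtinGroup Γ} (hg : g ≠ 1) : ∃ i, P.headIn i g ≠ 1 := by
  by_contra! h
  have hempty := congrArg PushoutI.NormalWord.prod (P.gatedLengths.eq_empty_of_localHead_eq_one h)
  rw [normalForm, PushoutI.NormalWord.prod_smul, PushoutI.NormalWord.prod_empty, mul_one] at hempty
  exact hg (by rw [← P.ofPushout_toPushout g, hempty, map_one])

theorem len_eq_normalFormLen (g : ArtinGroup Γ) : len g = P.normalFormLen g := by
  refine len_eq_of_le_of_exists_lt P.normalFormLen P.normalFormLen_one ?_ (fun g hg => ?_) g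
  · rintro ⟨v, s⟩ g
    obtain ⟨i, hi⟩ := P.exists_mem v
    rw [P.normalFormLen_letter_mul hi, P.normalFormLen_eq i, add_right_comm]
    exact Nat.add_le_add_right (len_letter_mul_le _ _) _
  · obtain ⟨i, hi⟩ := P.exists_headIn_ne_one hg
    obtain ⟨⟨v, s⟩, hx⟩ := exists_isFirstLetter hi
    refine ⟨(v, !s), ?_⟩
    rw [P.normalFormLen_letter_mul v.2, P.normalFormLen_eq i g,
      letter_not (Γ.induce (P.piece i)) (v, s)]
    exact Nat.add_lt_add_right hx _

theorem len_inclusion_mul (i : ι) (y : ArtinGroup (Γ.induce (P.piece i))) (g : ArtinGroup Γ) :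
    len (inclusion Γ (P.piece i) y * g) = len (y * P.headIn i g) + P.restLen i g := by
  rw [P.len_eq_normalFormLen, P.normalFormLen_inclusion_mul]

theorem len_eq (i : ι) (g : ArtinGroup Γ) : len g = len (P.headIn i g) + P.restLen i g := by
  rw [P.len_eq_normalFormLen, P.normalFormLen_eq i]

theorem inclusion_headIn {i : ι} {g : ArtinGroup Γ} (h : P.restLen i g = 0) :
    inclusion Γ (P.piece i) (P.headIn i g) = g := by
  have hlen := P.len_inclusion_mul i (P.headIn i g)⁻¹ g
  rw [inv_mul_cancel, len_one, h, map_inv] at hlen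
  exact inv_mul_eq_one.1 (eq_one_of_len_eq_zero hlen)

theorem isFirstLetter_iff {i : ι} {v : V} (hv : v ∈ P.piece i) (s : Bool) (g : ArtinGroup Γ) :
    IsFirstLetter (v, s) g ↔ IsFirstLetter (⟨v, hv⟩, s) (P.headIn i g) := by
  have hletter : letter Γ (v, s) = inclusion Γ (P.piece i) (letter _ (⟨v, hv⟩, s)) := by simp
  rw [IsFirstLetter, IsFirstLetter, hletter, ← map_inv, P.len_inclusion_mul, P.len_eq i g,
    add_lt_add_iff_right]

theorem exists_forall_isFirstLetter_headIn (g : ArtinGroup Γ) :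
    ∃ i, ∀ x, IsFirstLetter x g →
      ∃ h : x.1 ∈ P.piece i, IsFirstLetter (⟨x.1, h⟩, x.2) (P.headIn i g) := by
  obtain ⟨i, hi⟩ := exists_forall_ne_localHead_mem_range (P.normalForm g)
  refine ⟨i, fun ⟨v, s⟩ hx => ?_⟩
  suffices hv : v ∈ P.piece i from ⟨hv, (P.isFirstLetter_iff hv s g).1 hx⟩
  obtain ⟨j, hj⟩ := P.exists_mem v
  obtain rfl | hij := eq_or_ne j i
  · exact hj
  obtain ⟨w, hw⟩ := hi j hij
  have hmem : P.headIn j g ∈ standardSubgroup (Γ.induce (P.piece j)) (Set.range (P.incl j)) := by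
    rw [headIn, ← hw]
    exact freeHom_mem (by simp [Set.preimage_range, FreeGroup.closure_range_of])
  obtain ⟨a, ha⟩ := (P.tame j).mem hmem ((P.isFirstLetter_iff hj s g).1 hx)
  obtain rfl : (a : V) = v := congrArg Subtype.val ha
  exact P.common_subset i a.2

include P

theorem fst_mem_of_isFirstLetter {J : Set V} {x : V × Bool} {g : ArtinGroup Γ}
    (hg : g ∈ standardSubgroup Γ J) (hx : IsFirstLetter x g) : x.1 ∈ J := by
  obtain ⟨i, hi⟩ := P.exists_mem x.1
  exact (P.tame i).mem (P.headIn_mem hg i) ((P.isFirstLetter_iff hi x.2 g).1 hx)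

theorem tameGeodesics : Γ.TameGeodesics := by
  refine ⟨fun x y g hx hy hxy => ?_, fun x y g hx hy hxy => ?_, fun a b g hab ha hb hg => ?_,
    fun J x g => P.fst_mem_of_isFirstLetter⟩
  all_goals obtain ⟨i, hi⟩ := P.exists_forall_isFirstLetter_headIn g
  · obtain ⟨hx', hx⟩ := hi x hx
    obtain ⟨hy', hy⟩ := hi y hy
    exact (P.tame i).adj hx hy (by simpa [Prod.ext_iff] using hxy)
  · obtain ⟨hx', hx⟩ := hi x hx
    obtain ⟨hy', hy⟩ := hi y hy
    rw [P.len_eq i g]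
    exact ((P.tame i).label_le hx hy (by simpa [Prod.ext_iff] using hxy)).trans
      (Nat.le_add_right _ _)
  · obtain ⟨ha', ha⟩ := hi _ ha
    obtain ⟨hb', hb⟩ := hi _ hb
    have hle : Γ.label a b ≤ len (P.headIn i g) :=
      (P.tame i).label_le ha hb (by simpa using hab.ne)
    have hlen := P.len_eq i g
    have hhead := (P.tame i).eq_delta (a := ⟨a, ha'⟩) (b := ⟨b, hb'⟩) hab ha hb
      (show _ = Γ.label a b by omega)
    rw [← P.inclusion_headIn (i := i) (g := g) (by omega), hhead, inclusion_artinDelta]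

end NormalForm

end LabeledGraph.TameSplitting

namespace ArtinGroup

section Subsingleton

variable {V : Type*} {Γ : LabeledGraph V}

theorem toAdd_expSum_letter_mul (x : V × Bool) (g : ArtinGroup Γ) :
    (expSum (letter Γ x * g)).toAdd = (if x.2 then 1 else -1) + (expSum g).toAdd := by
  rcases x with ⟨v, _ | _⟩ <;> simp

variable [Subsingleton V]

theorem eq_gen_zpow_expSum (v : V) (g : ArtinGroup Γ) :
    g = artinGen Γ v ^ (expSum g).toAdd := by
  have h : MonoidHom.id (ArtinGroup Γ) = (zpowersHom _ (artinGen Γ v)).comp expSum :=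
    hom_ext Γ fun w => by simp [Subsingleton.elim w v]
  exact DFunLike.congr_fun h g

theorem len_eq_natAbs_expSum (g : ArtinGroup Γ) : len g = (expSum g).toAdd.natAbs := by
  refine len_eq_of_le_of_exists_lt (fun g => (expSum g).toAdd.natAbs) (by simp) (fun x g => ?_)
    (fun g hg => ?_) g
  · simp only [toAdd_expSum_letter_mul]
    split_ifs <;> omega
  · obtain ⟨⟨v, -⟩, -⟩ := exists_isFirstLetter hg
    have hexp : (expSum g).toAdd ≠ 0 := fun h => hg (by rw [eq_gen_zpow_expSum v g, h, zpow_zero])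
    refine ⟨(v, decide ((expSum g).toAdd < 0)), ?_⟩
    simp only [toAdd_expSum_letter_mul, decide_eq_true_eq]
    split_ifs <;> omega

theorem IsFirstLetter.eq_of_subsingleton {x y : V × Bool} {g : ArtinGroup Γ}
    (hx : IsFirstLetter x g) (hy : IsFirstLetter y g) : x = y := by
  obtain ⟨a, s⟩ := x
  obtain ⟨b, t⟩ := y
  obtain rfl := Subsingleton.elim a b
  rw [IsFirstLetter, ← letter_not, len_eq_natAbs_expSum, len_eq_natAbs_expSum,
    toAdd_expSum_letter_mul] at hx hy
  cases s <;> cases t <;> simp only [Bool.not_false, Bool.not_true, if_true, Bool.false_eq_true,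
    if_false] at hx hy ⊢ <;> omega

end Subsingleton

end ArtinGroup

namespace LabeledGraph

variable {V : Type*} (Γ : LabeledGraph V)

theorem tameGeodesics_of_subsingleton [Subsingleton V] : Γ.TameGeodesics := by
  refine ⟨fun x y g hx hy h => absurd (hx.eq_of_subsingleton hy) h,
    fun x y g hx hy h => absurd (hx.eq_of_subsingleton hy) h,
    fun a b g h => absurd (Subsingleton.elim a b) h.ne, fun J x g hg hx => ?_⟩
  obtain rfl | ⟨a, ha⟩ := J.eq_empty_or_nonempty
  · rw [standardSubgroup, Set.image_empty, Subgroup.closure_empty, Subgroup.mem_bot] at hg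
    exact absurd (hg ▸ hx) (not_isFirstLetter_one x)
  · exact Subsingleton.elim a x.1 ▸ ha

variable {Γ}

/-- The splitting of a triangle-free labeled graph into the complement of a vertex and its star,
which meet in the link of the vertex. -/
def linkSplitting (v : V) (hlink : Γ.graph.IsIndepSet (Γ.graph.neighborSet v))
    (hcompl : (Γ.induce {x | x ≠ v}).TameGeodesics)
    (hstar : (Γ.induce {x | x = v ∨ Γ.graph.Adj v x}).TameGeodesics) :
    Γ.TameSplitting Bool where
  piece i := match i with
    | true => {x | x ≠ v}
    | false => {x | x = v ∨ Γ.graph.Adj v x}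
  common := Γ.graph.neighborSet v
  common_subset i x hx := match i with
    | true => hx.ne.symm
    | false => Or.inr hx
  inter_subset i j hij x hx := match i, j with
    | true, true | false, false => absurd rfl hij
    | true, false => hx.2.resolve_left hx.1
    | false, true => hx.1.resolve_left hx.2
  exists_mem x := by
    by_cases hx : x = v
    · exact ⟨false, Or.inl hx⟩
    · exact ⟨true, hx⟩
  exists_mem_of_adj a b hab := by
    by_cases ha : a = v
    · exact ⟨false, Or.inl ha, Or.inr (ha ▸ hab)⟩
    by_cases hb : b = v
    · exact ⟨false, Or.inr (hb ▸ hab.symm), Or.inl hb⟩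
    · exact ⟨true, ha, hb⟩
  indep a ha b hb hab := hlink ha hb hab.ne hab
  tame i := match i with
    | true => hcompl
    | false => hstar

theorem tameGeodesics_of_forall_adj [Nontrivial V] (hclique : Γ.graph.CliqueFree 3)
    (hadj : ∀ a b, a ≠ b → Γ.graph.Adj a b) : Γ.TameGeodesics := by
  obtain ⟨a, b, hab⟩ := exists_pair_ne V
  have hbij : Function.Bijective (fun s : Bool => if s then a else b) := by
    refine ⟨fun s t => by cases s <;> cases t <;> simp [hab, hab.symm], fun c => ?_⟩
    by_contra! hc
    exact SimpleGraph.isIndepSet_neighborSet_of_triangleFree _ hclique a (hadj a b hab)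
      (hadj a c (hc true)) (hc false) (hadj b c (hc false))
  have hedge : Γ.IsEdge (Equiv.ofBijective _ hbij) (Γ.label a b) :=
    { adj s := by cases s <;> simp [hadj, hab, hab.symm]
      label_eq s := by cases s <;> simp [Γ.label_symm b a] }
  exact hedge.tameGeodesics

theorem tameGeodesics_of_cliqueFree [Finite V] (hclique : Γ.graph.CliqueFree 3) :
    Γ.TameGeodesics := by
  induction hn : Nat.card V using Nat.strong_induction_on generalizing V with
  | _ n ih =>
    have hinduce : ∀ S : Set V, (∃ w, w ∉ S) → (Γ.induce S).TameGeodesics := by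
      rintro S ⟨w, hw⟩
      exact ih _ (hn ▸ Set.ncard_lt_card fun h => hw (h ▸ Set.mem_univ w))
        (hclique.comap ⟨(SimpleGraph.Embedding.induce S).toCopy⟩) rfl
    by_cases! hex : ∃ v w, w ≠ v ∧ ¬ Γ.graph.Adj v w
    · obtain ⟨v, w, hwv, hvw⟩ := hex
      have hlink := SimpleGraph.isIndepSet_neighborSet_of_triangleFree _ hclique v
      exact (linkSplitting v hlink (hinduce _ ⟨v, fun h => h rfl⟩)
        (hinduce _ ⟨w, not_or.2 ⟨hwv, hvw⟩⟩)).tameGeodesics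
    · rcases subsingleton_or_nontrivial V
      · exact tameGeodesics_of_subsingleton Γ
      · exact tameGeodesics_of_forall_adj hclique fun a b hab => hex a b hab.symm

end LabeledGraph

/-! ### Least common multiples and prefixes of Δ -/

namespace ArtinGroup

section CommonMultiples

variable {V : Type*} (Γ : LabeledGraph V)

/-- The elements of length `m` beginning with each of two given letters, where `m` is the label
of the edge spanned by the letters. -/
def leastCommonMultiples (x y : V × Bool) : Set (ArtinGroup Γ) :=
  {g | IsFirstLetter x g ∧ IsFirstLetter y g ∧ len g = Γ.label x.1 y.1}

theorem leastCommonMultiples_comm (x y : V × Bool) :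
    leastCommonMultiples Γ x y = leastCommonMultiples Γ y x := by
  ext g
  simp only [leastCommonMultiples, Set.mem_ofPred_eq, Γ.label_symm x.1 y.1]
  tauto

theorem preimage_inversion_leastCommonMultiples (x y : V × Bool) :
    inversion Γ ⁻¹' leastCommonMultiples Γ x y =
      leastCommonMultiples Γ (x.1, !x.2) (y.1, !y.2) := by
  ext g
  simp only [leastCommonMultiples, Set.mem_preimage, Set.mem_ofPred_eq, isFirstLetter_inversion,
    len_inversion]

/-- The common multiple `b⁻¹aba⋯` of `a` and `b⁻¹`, of the same length as `Δ`. -/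
def twist (a b : V) : ArtinGroup Γ :=
  (artinGen Γ b)⁻¹ * altProd (Γ.label a b - 1) (artinGen Γ a) (artinGen Γ b)

theorem toAdd_expSum_twist (a b : V) :
    (expSum (twist Γ a b)).toAdd = (Γ.label a b - 1 : ℕ) - 1 := by
  rw [twist, map_mul, map_inv, expSum_gen, toAdd_mul, toAdd_inv, toAdd_ofAdd,
    toAdd_expSum_altProd]
  ring

theorem expSum_inversion (g : ArtinGroup Γ) : expSum (inversion Γ g) = (expSum g)⁻¹ := by
  have h : expSum.comp (inversion Γ).toMonoidHom = expSum⁻¹ := hom_ext Γ fun v => by simp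
  exact DFunLike.congr_fun h g

variable {Γ}

theorem artinDelta_mem_leastCommonMultiples {a b : V} (h : Γ.graph.Adj a b) :
    artinDelta Γ a b ∈ leastCommonMultiples Γ (a, true) (b, true) :=
  ⟨(isFirstLetter_artinDelta h).1, (isFirstLetter_artinDelta h).2, len_artinDelta a b⟩

theorem inv_gen_mul_altProd {n : ℕ} {a b : V} (hn : Γ.label a b = n + 1) (h : Γ.graph.Adj a b) :
    (artinGen Γ b)⁻¹ * altProd n (artinGen Γ a) (artinGen Γ b) =
      altProd n (artinGen Γ a) (artinGen Γ b) * (artinGen Γ (if n.bodd then b else a))⁻¹ := by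
  have hrel := altProd_gen_comm Γ h
  rw [hn, altProd_succ_right, altProd] at hrel
  rw [inv_mul_eq_iff_eq_mul, ← mul_assoc, ← hrel, apply_ite (artinGen Γ), mul_inv_cancel_right]

end CommonMultiples

end ArtinGroup

namespace LabeledGraph.TameGeodesics

variable {V : Type*} {Γ : LabeledGraph V} (hΓ : Γ.TameGeodesics)
include hΓ

theorem letter_injective : Function.Injective (letter Γ) := by
  intro x y hxy
  by_contra hne
  have hx : IsFirstLetter x (letter Γ x) := isFirstLetter_letter x
  have hy : IsFirstLetter y (letter Γ x) := hxy ▸ isFirstLetter_letter y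
  have hlabel := hΓ.label_le hx hy hne
  have := Γ.two_le_label (hΓ.adj hx hy hne)
  rw [len_letter] at hlabel
  omega

theorem gen_injective : Function.Injective (artinGen Γ) := fun a b hab =>
  congrArg Prod.fst (hΓ.letter_injective (a₁ := (a, true)) (a₂ := (b, true)) hab)

theorem len_twist {a b : V} (h : Γ.graph.Adj a b) : len (twist Γ a b) = Γ.label a b := by
  have htwo := Γ.two_le_label h
  have hlen := len_altProd (Γ := Γ) (Γ.label a b - 1) a b
  have hnot : ¬ IsFirstLetter (b, true)
      (altProd (Γ.label a b - 1) (artinGen Γ a) (artinGen Γ b)) := fun hb => by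
    have hlabel : Γ.label a b ≤ _ :=
      hΓ.label_le (isFirstLetter_altProd (by omega) a b) hb (by simpa using h.ne)
    omega
  have hstep := len_of_not_isFirstLetter hnot
  rw [letter_true] at hstep
  rw [twist, hstep, hlen]
  omega

theorem twist_mem_leastCommonMultiples {a b : V} (h : Γ.graph.Adj a b) :
    twist Γ a b ∈ leastCommonMultiples Γ (a, true) (b, false) := by
  refine ⟨?_, ?_, hΓ.len_twist h⟩ <;> rw [IsFirstLetter, hΓ.len_twist h, twist]
  · obtain ⟨n, hn⟩ : ∃ n, Γ.label a b = n + 2 := ⟨_, (Nat.sub_add_cancel (Γ.two_le_label h)).symm⟩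
    rw [hn, Nat.add_succ_sub_one, inv_gen_mul_altProd hn h, altProd, letter_true, mul_assoc,
      inv_mul_cancel_left, ← letter_false]
    refine (len_mul_le _ _).trans_lt ?_
    rw [len_altProd, len_letter]
    omega
  · rw [letter_false, inv_inv, mul_inv_cancel_left, len_altProd]
    have := Γ.two_le_label h
    omega

theorem leastCommonMultiples_nonempty {x y : V × Bool} (h : Γ.graph.Adj x.1 y.1) :
    (leastCommonMultiples Γ x y).Nonempty := by
  obtain ⟨a, s⟩ := x
  obtain ⟨b, t⟩ := y
  cases s <;> cases t
  · have hdelta := artinDelta_mem_leastCommonMultiples h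
    refine ⟨inversion Γ (artinDelta Γ a b), ?_⟩
    rwa [← Set.mem_preimage, preimage_inversion_leastCommonMultiples]
  · rw [leastCommonMultiples_comm]
    exact ⟨_, hΓ.twist_mem_leastCommonMultiples h.symm⟩
  · exact ⟨_, hΓ.twist_mem_leastCommonMultiples h⟩
  · exact ⟨_, artinDelta_mem_leastCommonMultiples h⟩

theorem subsingleton_leastCommonMultiples_true {a b : V} (h : Γ.graph.Adj a b) :
    (leastCommonMultiples Γ (a, true) (b, true)).Subsingleton :=
  fun _ ⟨ha, hb, hg⟩ _ ⟨ha', hb', hg'⟩ =>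
    (hΓ.eq_delta h ha hb hg).trans (hΓ.eq_delta h ha' hb' hg').symm

-- The twist of `a, b` and the inverted twist of `b, a` have exponent sums `m - 2` and `2 - m`.
theorem not_subsingleton_leastCommonMultiples {a b : V} (h : Γ.graph.Adj a b)
    (hlabel : 3 ≤ Γ.label a b) :
    ¬ (leastCommonMultiples Γ (a, true) (b, false)).Subsingleton := by
  intro hsub
  have hinv : inversion Γ (twist Γ b a) ∈ leastCommonMultiples Γ (a, true) (b, false) := by
    rw [← Set.mem_preimage, preimage_inversion_leastCommonMultiples, leastCommonMultiples_comm]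
    exact hΓ.twist_mem_leastCommonMultiples h.symm
  have hexp := congrArg (fun g => (expSum g).toAdd)
    (hsub (hΓ.twist_mem_leastCommonMultiples h) hinv)
  simp only [expSum_inversion, toAdd_inv, toAdd_expSum_twist, Γ.label_symm b a] at hexp
  omega

theorem subsingleton_leastCommonMultiples_iff {x y : V × Bool} (h : Γ.graph.Adj x.1 y.1)
    (hlabel : 3 ≤ Γ.label x.1 y.1) :
    (leastCommonMultiples Γ x y).Subsingleton ↔ x.2 = y.2 := by
  obtain ⟨a, s⟩ := x
  obtain ⟨b, t⟩ := y
  cases s <;> cases t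
  · refine iff_of_true ?_ rfl
    have := (hΓ.subsingleton_leastCommonMultiples_true h).preimage (inversion Γ).injective
    rwa [preimage_inversion_leastCommonMultiples] at this
  · rw [leastCommonMultiples_comm]
    rw [Γ.label_symm] at hlabel
    exact iff_of_false (hΓ.not_subsingleton_leastCommonMultiples h.symm hlabel) (by simp)
  · exact iff_of_false (hΓ.not_subsingleton_leastCommonMultiples h hlabel) (by simp)
  · exact iff_of_true (hΓ.subsingleton_leastCommonMultiples_true h) rfl

end LabeledGraph.TameGeodesics

namespace ArtinGroup

section Prefixes

variable {V : Type*} {Γ : LabeledGraph V} {p g : ArtinGroup Γ}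

/-- Some geodesic from `1` to `g` passes through `p`. -/
def IsPrefix (p g : ArtinGroup Γ) : Prop := len p + len (p⁻¹ * g) = len g

theorem IsPrefix.isFirstLetter (hp : IsPrefix p g) {x : V × Bool} (hx : IsFirstLetter x p) :
    IsFirstLetter x g := by
  have hle := len_mul_le ((letter Γ x)⁻¹ * p) (p⁻¹ * g)
  rw [mul_assoc, mul_inv_cancel_left] at hle
  rw [IsPrefix] at hp
  rw [IsFirstLetter] at *
  omega

theorem IsPrefix.inv_letter_mul (hp : IsPrefix p g) {x : V × Bool} (hx : IsFirstLetter x p) :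
    IsPrefix ((letter Γ x)⁻¹ * p) ((letter Γ x)⁻¹ * g) := by
  have hpx := hx.len_eq
  have hgx := (hp.isFirstLetter hx).len_eq
  rw [IsPrefix] at *
  rw [mul_inv_rev, inv_inv, mul_assoc, mul_inv_cancel_left]
  omega

theorem isPrefix_altProd {k n : ℕ} (hkn : k ≤ n) (a b : V) :
    IsPrefix (altProd k (artinGen Γ a) (artinGen Γ b))
      (altProd n (artinGen Γ a) (artinGen Γ b)) := by
  obtain ⟨l, rfl⟩ := Nat.exists_eq_add_of_le hkn
  rw [IsPrefix, len_altProd, len_altProd, altProd_add, inv_mul_cancel_left]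
  split_ifs <;> rw [len_altProd]

theorem altProd_mem_standardSubgroup (n : ℕ) (a b : V) :
    altProd n (artinGen Γ a) (artinGen Γ b) ∈ standardSubgroup Γ {a, b} := by
  induction n generalizing a b with
  | zero => exact one_mem _
  | succ n ih =>
    rw [altProd, Set.pair_comm]
    exact mul_mem (letter_mem_standardSubgroup (x := (a, true)) (by simp)) (ih b a)

end Prefixes

end ArtinGroup

namespace LabeledGraph.TameGeodesics

variable {V : Type*} {Γ : LabeledGraph V} (hΓ : Γ.TameGeodesics)
include hΓ

theorem eq_of_isFirstLetter_altProd {n : ℕ} {a b : V} {x : V × Bool} (hn : n < Γ.label a b)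
    (hx : IsFirstLetter x (altProd n (artinGen Γ a) (artinGen Γ b))) : x = (a, true) := by
  by_contra hne
  have ha : IsFirstLetter (a, true) (altProd n (artinGen Γ a) (artinGen Γ b)) :=
    isFirstLetter_altProd (fun h => not_isFirstLetter_one x (by rwa [h] at hx)) a b
  obtain hxa | hxb : x.1 = a ∨ x.1 = b := hΓ.mem (altProd_mem_standardSubgroup n a b) hx
  · exact (hΓ.adj hx ha hne).ne hxa
  · have hlabel : Γ.label a x.1 ≤ _ := hΓ.label_le ha hx (Ne.symm hne)
    rw [len_altProd, hxb] at hlabel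
    omega

theorem eq_altProd_of_isPrefix {n : ℕ} {a b : V} {p : ArtinGroup Γ} (hn : n < Γ.label a b)
    (hp : IsPrefix p (altProd n (artinGen Γ a) (artinGen Γ b))) :
    p = altProd (len p) (artinGen Γ a) (artinGen Γ b) := by
  induction n generalizing a b p with
  | zero =>
    rw [altProd, IsPrefix, len_one] at hp
    obtain rfl := eq_one_of_len_eq_zero (g := p) (by omega)
    rw [len_one, altProd]
  | succ n ih =>
    obtain rfl | hne := eq_or_ne p 1
    · rw [len_one, altProd]
    obtain ⟨x, hx⟩ := exists_isFirstLetter hne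
    obtain rfl := hΓ.eq_of_isFirstLetter_altProd hn (hp.isFirstLetter hx)
    have hrest := hp.inv_letter_mul hx
    rw [letter_true, altProd, inv_mul_cancel_left] at hrest
    rw [hx.len_eq, altProd, ← inv_mul_eq_iff_eq_mul]
    exact ih (by rw [Γ.label_symm]; omega) hrest

theorem eq_altProd_of_isPrefix_artinDelta {a b : V} {p : ArtinGroup Γ} (h : Γ.graph.Adj a b)
    (hp : IsPrefix p (artinDelta Γ a b)) (ha : IsFirstLetter (a, true) p) :
    p = altProd (len p) (artinGen Γ a) (artinGen Γ b) := by
  obtain ⟨n, hn⟩ : ∃ n, Γ.label a b = n + 1 :=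
    ⟨_, (Nat.sub_add_cancel (one_le_two.trans (Γ.two_le_label h))).symm⟩
  have hrest := hp.inv_letter_mul ha
  rw [letter_true, artinDelta, hn, altProd, inv_mul_cancel_left] at hrest
  rw [ha.len_eq, altProd, ← inv_mul_eq_iff_eq_mul]
  exact hΓ.eq_altProd_of_isPrefix (by rw [Γ.label_symm]; omega) hrest

end LabeledGraph.TameGeodesics

/-! ### Based isometries -/

/-- A bijective isometry of an Artin group with its word metric that fixes the identity. -/
structure BasedIsometry {V : Type*} (Γ : LabeledGraph V) extends
    ArtinGroup Γ ≃ ArtinGroup Γ where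
  map_one' : toFun 1 = 1
  len_eq' : ∀ g h, len ((toFun g)⁻¹ * toFun h) = len (g⁻¹ * h)

namespace BasedIsometry

variable {V : Type*} {Γ : LabeledGraph V}

instance : CoeFun (BasedIsometry Γ) fun _ => ArtinGroup Γ → ArtinGroup Γ :=
  ⟨fun F => F.toEquiv⟩

variable (F : BasedIsometry Γ)

theorem apply_one : F 1 = 1 := F.map_one'

theorem len_inv_apply_mul_apply (g h : ArtinGroup Γ) : len ((F g)⁻¹ * F h) = len (g⁻¹ * h) :=
  F.len_eq' g h

theorem len_apply (g : ArtinGroup Γ) : len (F g) = len g := by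
  simpa [F.apply_one] using F.len_inv_apply_mul_apply 1 g

/-- The inverse of a based isometry. -/
def symm : BasedIsometry Γ where
  toEquiv := F.toEquiv.symm
  map_one' := F.toEquiv.symm_apply_eq.2 F.apply_one.symm
  len_eq' g h := by
    have := F.len_inv_apply_mul_apply (F.toEquiv.symm g) (F.toEquiv.symm h)
    rw [F.apply_symm_apply, F.apply_symm_apply] at this
    exact this.symm

theorem symm_apply_apply (g : ArtinGroup Γ) : F.symm (F g) = g :=
  F.toEquiv.symm_apply_apply g

/-- A based isometry seen from the base point `g`, with `g` and its image moved to `1`. -/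
def localAt (g : ArtinGroup Γ) : BasedIsometry Γ where
  toEquiv := ((Equiv.mulLeft g).trans F.toEquiv).trans (Equiv.mulLeft (F g)⁻¹)
  map_one' := by simp
  len_eq' h k := by
    have := F.len_inv_apply_mul_apply (g * h) (g * k)
    simpa [mul_assoc] using this

theorem apply_mul (g h : ArtinGroup Γ) : F (g * h) = F g * F.localAt g h := by
  simp [localAt]

theorem localAt_inv_localAt (g : ArtinGroup Γ) : (F.localAt g⁻¹).localAt g = F := by
  obtain ⟨e, he, -⟩ := F
  have he' : e 1 = 1 := he
  simp [localAt, he', Equiv.ext_iff]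

/-- A based isometry followed by the global inversion. -/
def invert : BasedIsometry Γ where
  toEquiv := F.toEquiv.trans (inversion Γ).toEquiv
  map_one' := by simp [F.apply_one]
  len_eq' g h := by
    simpa [← map_inv, ← map_mul, len_inversion] using F.len_inv_apply_mul_apply g h

theorem invert_apply (g : ArtinGroup Γ) : F.invert g = inversion Γ (F g) := rfl

theorem exists_letter_eq_apply_letter (x : V × Bool) : ∃ y, letter Γ y = F (letter Γ x) :=
  exists_letter_of_len_eq_one (by rw [F.len_apply, len_letter])

/-- The action of a based isometry on the letters, that is, on the unit sphere. -/
noncomputable def letterMap (x : V × Bool) : V × Bool :=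
  (F.exists_letter_eq_apply_letter x).choose

theorem apply_letter (x : V × Bool) : F (letter Γ x) = letter Γ (F.letterMap x) :=
  (F.exists_letter_eq_apply_letter x).choose_spec.symm

theorem isFirstLetter_letterMap {x : V × Bool} {g : ArtinGroup Γ} :
    IsFirstLetter (F.letterMap x) (F g) ↔ IsFirstLetter x g := by
  rw [IsFirstLetter, IsFirstLetter, ← F.apply_letter, F.len_inv_apply_mul_apply, F.len_apply]

section LetterMap

variable (hΓ : Γ.TameGeodesics)
include hΓ

theorem letterMap_symm_letterMap (x : V × Bool) : F.symm.letterMap (F.letterMap x) = x :=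
  hΓ.letter_injective (by rw [← apply_letter, ← apply_letter, symm_apply_apply])

theorem letterMap_injective : Function.Injective F.letterMap :=
  Function.LeftInverse.injective (F.letterMap_symm_letterMap hΓ)

theorem letterMap_localAt_letter (x : V × Bool) :
    (F.localAt (letter Γ x)).letterMap (x.1, !x.2) =
      ((F.letterMap x).1, !(F.letterMap x).2) := by
  have h := F.apply_mul (letter Γ x) (letter Γ (x.1, !x.2))
  rw [apply_letter (F.localAt _), letter_not, mul_inv_cancel, F.apply_one, F.apply_letter,
    eq_comm, mul_eq_one_iff_inv_eq, ← letter_not] at h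
  exact (hΓ.letter_injective h).symm

theorem letterMap_invert (x : V × Bool) :
    F.invert.letterMap x = ((F.letterMap x).1, !(F.letterMap x).2) :=
  hΓ.letter_injective <| by
    rw [← apply_letter, invert_apply, F.apply_letter, inversion_letter]

theorem adj_letterMap_and_label_le {x y : V × Bool} (h : Γ.graph.Adj x.1 y.1) :
    Γ.graph.Adj (F.letterMap x).1 (F.letterMap y).1 ∧
      Γ.label (F.letterMap x).1 (F.letterMap y).1 ≤ Γ.label x.1 y.1 := by
  obtain ⟨g, hx, hy, hg⟩ := hΓ.leastCommonMultiples_nonempty h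
  rw [← F.isFirstLetter_letterMap] at hx hy
  rw [← F.len_apply] at hg
  have hne : F.letterMap x ≠ F.letterMap y := fun hxy =>
    h.ne (congrArg Prod.fst (F.letterMap_injective hΓ hxy))
  exact ⟨hΓ.adj hx hy hne, hg ▸ hΓ.label_le hx hy hne⟩

theorem adj_letterMap_iff {x y : V × Bool} :
    Γ.graph.Adj (F.letterMap x).1 (F.letterMap y).1 ↔ Γ.graph.Adj x.1 y.1 := by
  refine ⟨fun h => ?_, fun h => (F.adj_letterMap_and_label_le hΓ h).1⟩
  simpa only [F.letterMap_symm_letterMap hΓ] using (F.symm.adj_letterMap_and_label_le hΓ h).1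

theorem label_letterMap {x y : V × Bool} (h : Γ.graph.Adj x.1 y.1) :
    Γ.label (F.letterMap x).1 (F.letterMap y).1 = Γ.label x.1 y.1 := by
  refine (F.adj_letterMap_and_label_le hΓ h).2.antisymm ?_
  simpa only [F.letterMap_symm_letterMap hΓ] using
    (F.symm.adj_letterMap_and_label_le hΓ ((F.adj_letterMap_iff hΓ).2 h)).2

theorem preimage_leastCommonMultiples {x y : V × Bool} (h : Γ.graph.Adj x.1 y.1) :
    F ⁻¹' leastCommonMultiples Γ (F.letterMap x) (F.letterMap y) =
      leastCommonMultiples Γ x y := by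
  ext g
  simp only [leastCommonMultiples, Set.mem_preimage, Set.mem_ofPred_eq,
    F.isFirstLetter_letterMap, F.len_apply, F.label_letterMap hΓ h]

theorem subsingleton_leastCommonMultiples_letterMap_iff {x y : V × Bool}
    (h : Γ.graph.Adj x.1 y.1) :
    (leastCommonMultiples Γ (F.letterMap x) (F.letterMap y)).Subsingleton ↔
      (leastCommonMultiples Γ x y).Subsingleton := by
  rw [← F.preimage_leastCommonMultiples hΓ h]
  exact ⟨fun hs => hs.preimage F.injective,
    Set.subsingleton_of_preimage F.surjective _⟩

variable (hlarge : ∀ ⦃a b⦄, Γ.graph.Adj a b → 3 ≤ Γ.label a b)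
include hlarge

theorem sign_letterMap_iff {x y : V × Bool} (h : Γ.graph.Adj x.1 y.1) :
    (F.letterMap x).2 = (F.letterMap y).2 ↔ x.2 = y.2 := by
  have h' := (F.adj_letterMap_iff hΓ).2 h
  rw [← hΓ.subsingleton_leastCommonMultiples_iff h' (hlarge h'),
    F.subsingleton_leastCommonMultiples_letterMap_iff hΓ h,
    hΓ.subsingleton_leastCommonMultiples_iff h (hlarge h)]

variable (hconn : Γ.graph.Preconnected)
include hconn

theorem sign_letterMap_not (a : V) :
    (F.letterMap (a, false)).2 = !(F.letterMap (a, true)).2 := by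
  rw [Bool.eq_not]
  intro h
  obtain _ | _ := subsingleton_or_nontrivial V
  · have := F.letterMap_injective hΓ (Prod.ext (Subsingleton.elim _ _) h)
    simp at this
  · obtain ⟨b, hb⟩ := hconn.exists_adj_of_nontrivial a
    have h₁ := F.sign_letterMap_iff hΓ hlarge (x := (a, false)) (y := (b, true)) hb
    have h₂ := F.sign_letterMap_iff hΓ hlarge (x := (a, true)) (y := (b, true)) hb
    simp [h, h₂] at h₁

theorem sign_letterMap_eq (a b : V) :
    (F.letterMap (a, true)).2 = (F.letterMap (b, true)).2 := by
  obtain ⟨p⟩ := hconn a b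
  induction p with
  | nil => rfl
  | @cons a c _ h _ ih =>
    exact ((F.sign_letterMap_iff hΓ hlarge (x := (a, true)) (y := (c, true)) h).2 rfl).trans ih

theorem exists_sign : ∃ s, ∀ x, (F.letterMap x).2 = xor x.2 s := by
  obtain _ | ⟨⟨v⟩⟩ := isEmpty_or_nonempty V
  · exact ⟨false, fun x => isEmptyElim x.1⟩
  refine ⟨!(F.letterMap (v, true)).2, ?_⟩
  rintro ⟨a, _ | _⟩
  · rw [F.sign_letterMap_not hΓ hlarge hconn, F.sign_letterMap_eq hΓ hlarge hconn a v,
      Bool.false_xor]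
  · rw [F.sign_letterMap_eq hΓ hlarge hconn a v, Bool.true_xor, Bool.not_not]

end LetterMap

/-- A based isometry is positive if it maps generators to generators and their inverses to
inverses of generators. -/
def IsPositive : Prop := ∀ x, (F.letterMap x).2 = x.2

section Sign

variable {F} (hΓ : Γ.TameGeodesics)
include hΓ

theorem IsPositive.symm (hF : F.IsPositive) : F.symm.IsPositive := fun x => by
  rw [← hF]
  exact congrArg Prod.snd (F.symm.letterMap_symm_letterMap hΓ x)

variable (hlarge : ∀ ⦃a b⦄, Γ.graph.Adj a b → 3 ≤ Γ.label a b)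
  (hconn : Γ.graph.Preconnected)
include hlarge hconn

variable (F) in
theorem isPositive_or_isPositive_invert : F.IsPositive ∨ F.invert.IsPositive := by
  obtain ⟨_ | _, hs⟩ := F.exists_sign hΓ hlarge hconn
  · exact .inl fun x => by rw [hs, Bool.xor_false]
  · exact .inr fun x => by rw [F.letterMap_invert hΓ, hs, Bool.xor_true, Bool.not_not]

-- Seen from the letter `x`, the letter `x⁻¹` leads back to `1`, so its image has the sign opposite
-- to that of the image of `x`.
theorem IsPositive.localAt_letter (hF : F.IsPositive) (x : V × Bool) :
    (F.localAt (letter Γ x)).IsPositive := by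
  obtain ⟨_ | _, hs⟩ := (F.localAt (letter Γ x)).exists_sign hΓ hlarge hconn
  · exact fun y => by rw [hs, Bool.xor_false]
  · have hback := hs (x.1, !x.2)
    rw [F.letterMap_localAt_letter hΓ, hF x] at hback
    simp at hback

end Sign

end BasedIsometry

namespace LabeledGraphIso

variable {V : Type*} {Γ : LabeledGraph V}

/-- The inverse of an isomorphism of labeled graphs. -/
def symm {W : Type*} {Λ : LabeledGraph W} (α : LabeledGraphIso Γ Λ) : LabeledGraphIso Λ Γ where
  toEquiv := α.toEquiv.symm
  adj_iff a b := by simp [← α.adj_iff]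
  label_eq a b h := by
    have := α.label_eq (a := α.toEquiv.symm a) (b := α.toEquiv.symm b) (by simpa [← α.adj_iff])
    simpa using this.symm

/-- The composite of two isomorphisms of labeled graphs. -/
def trans {W X : Type*} {Λ : LabeledGraph W} {Ξ : LabeledGraph X} (α : LabeledGraphIso Γ Λ)
    (β : LabeledGraphIso Λ Ξ) : LabeledGraphIso Γ Ξ where
  toEquiv := α.toEquiv.trans β.toEquiv
  adj_iff a b := (β.adj_iff _ _).trans (α.adj_iff a b)
  label_eq _ _ h := (β.label_eq ((α.adj_iff _ _).2 h)).trans (α.label_eq h)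

/-- The homomorphism of Artin groups induced by an isomorphism of labeled graphs. -/
def artinMap {W : Type*} {Λ : LabeledGraph W} (α : LabeledGraphIso Γ Λ) :
    ArtinGroup Γ →* ArtinGroup Λ :=
  lift Γ (fun v => artinGen Λ (α.toEquiv v)) fun a b h => by
    rw [← α.label_eq h]
    exact altProd_gen_comm Λ ((α.adj_iff a b).2 h)

@[simp]
theorem artinMap_gen {W : Type*} {Λ : LabeledGraph W} (α : LabeledGraphIso Γ Λ) (v : V) :
    α.artinMap (artinGen Γ v) = artinGen Λ (α.toEquiv v) :=
  lift_gen ..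

/-- The automorphism of an Artin group induced by an automorphism of its labeled graph. -/
def artinAut (α : LabeledGraphIso Γ Γ) : MulAut (ArtinGroup Γ) :=
  α.artinMap.toMulEquiv α.symm.artinMap (hom_ext Γ fun v => by simp [symm])
    (hom_ext Γ fun v => by simp [symm])

theorem artinAut_gen (α : LabeledGraphIso Γ Γ) (v : V) :
    α.artinAut (artinGen Γ v) = artinGen Γ (α.toEquiv v) :=
  α.artinMap_gen v

theorem artinAut_letter (α : LabeledGraphIso Γ Γ) (x : V × Bool) :
    α.artinAut (letter Γ x) = letter Γ (α.toEquiv x.1, x.2) := by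
  rcases x with ⟨v, _ | _⟩ <;> simp [artinAut_gen]

end LabeledGraphIso

/-- A labeled graph is star rigid if an automorphism fixing a vertex and all its neighbours is
the identity. -/
def LabeledGraph.IsStarRigid {V : Type*} (Γ : LabeledGraph V) : Prop :=
  ∀ α : LabeledGraphIso Γ Γ,
    (∃ v : V, α.toEquiv v = v ∧ ∀ w : V, Γ.graph.Adj v w → α.toEquiv w = w) →
      α.toEquiv = Equiv.refl V

theorem LabeledGraph.IsStarRigid.toEquiv_eq {V : Type*} {Γ : LabeledGraph V}
    (hrigid : Γ.IsStarRigid) {α β : LabeledGraphIso Γ Γ} {v : V}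
    (hv : α.toEquiv v = β.toEquiv v)
    (hadj : ∀ w, Γ.graph.Adj v w → α.toEquiv w = β.toEquiv w) : α.toEquiv = β.toEquiv := by
  have h : α.toEquiv.trans β.toEquiv.symm = Equiv.refl V :=
    hrigid (α.trans β.symm) ⟨v, β.toEquiv.symm_apply_eq.2 hv,
      fun w hw => β.toEquiv.symm_apply_eq.2 (hadj w hw)⟩
  exact Equiv.ext fun w => β.toEquiv.symm_apply_eq.1 (Equiv.ext_iff.1 h w)

namespace BasedIsometry

variable {V : Type*} {Γ : LabeledGraph V} (F : BasedIsometry Γ)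

theorem isPrefix_apply {p g : ArtinGroup Γ} (hp : IsPrefix p g) : IsPrefix (F p) (F g) := by
  rwa [IsPrefix, F.len_apply, F.len_apply, F.len_inv_apply_mul_apply]

/-- The action of a based isometry on the generators, forgetting whether a generator is mapped to
a generator or to the inverse of one. It is meant for positive isometries. -/
noncomputable def vertexMap (a : V) : V := (F.letterMap (a, true)).1

namespace IsPositive

variable {F} (hF : F.IsPositive)
include hF

theorem letterMap_true (a : V) : F.letterMap (a, true) = (F.vertexMap a, true) :=
  Prod.ext rfl (hF _)

theorem apply_gen (a : V) : F (artinGen Γ a) = artinGen Γ (F.vertexMap a) := by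
  rw [← letter_true, F.apply_letter, hF.letterMap_true, letter_true]

variable (hΓ : Γ.TameGeodesics)
include hΓ

theorem vertexMap_symm_vertexMap (a : V) : F.symm.vertexMap (F.vertexMap a) = a := by
  rw [vertexMap, ← hF.letterMap_true, F.letterMap_symm_letterMap hΓ]

/-- The automorphism of the labeled graph by which a positive isometry permutes the
generators. -/
noncomputable def vertexIso : LabeledGraphIso Γ Γ where
  toEquiv := ⟨F.vertexMap, F.symm.vertexMap, hF.vertexMap_symm_vertexMap hΓ,
    (hF.symm hΓ).vertexMap_symm_vertexMap hΓ⟩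
  adj_iff _ _ := F.adj_letterMap_iff hΓ
  label_eq a b h := F.label_letterMap hΓ (x := (a, true)) (y := (b, true)) h

theorem apply_artinDelta {a b : V} (h : Γ.graph.Adj a b) :
    F (artinDelta Γ a b) = artinDelta Γ (F.vertexMap a) (F.vertexMap b) := by
  have ha := F.isFirstLetter_letterMap.2 (isFirstLetter_artinDelta h).1
  have hb := F.isFirstLetter_letterMap.2 (isFirstLetter_artinDelta h).2
  rw [hF.letterMap_true] at ha hb
  refine hΓ.eq_delta ((F.adj_letterMap_iff hΓ).2 h) ha hb ?_
  rw [F.len_apply, len_artinDelta]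
  exact (F.label_letterMap hΓ (x := (a, true)) (y := (b, true)) h).symm

theorem apply_altProd {a b : V} (h : Γ.graph.Adj a b) {k : ℕ} (hk : k ≤ Γ.label a b) :
    F (altProd k (artinGen Γ a) (artinGen Γ b)) =
      altProd k (artinGen Γ (F.vertexMap a)) (artinGen Γ (F.vertexMap b)) := by
  obtain rfl | hpos := eq_or_ne k 0
  · exact F.apply_one
  have hprefix := F.isPrefix_apply (isPrefix_altProd hk a b)
  rw [← artinDelta, hF.apply_artinDelta hΓ h] at hprefix
  have hfirst := F.isFirstLetter_letterMap.2 (isFirstLetter_altProd hpos a b)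
  rw [hF.letterMap_true] at hfirst
  have := hΓ.eq_altProd_of_isPrefix_artinDelta ((F.adj_letterMap_iff hΓ).2 h) hprefix hfirst
  rwa [F.len_apply, len_altProd] at this

variable (hlarge : ∀ ⦃a b⦄, Γ.graph.Adj a b → 3 ≤ Γ.label a b)
  (hconn : Γ.graph.Preconnected)
include hlarge hconn

theorem localAt_gen (a : V) : (F.localAt (artinGen Γ a)).IsPositive :=
  hF.localAt_letter hΓ hlarge hconn (a, true)

theorem vertexMap_localAt_gen_of_adj {a b : V} (h : Γ.graph.Adj a b) :
    (F.localAt (artinGen Γ a)).vertexMap b = F.vertexMap b := by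
  have himage := hF.apply_altProd hΓ h (k := 2) (by have := hlarge h; omega)
  simp only [altProd, mul_one] at himage
  rw [F.apply_mul, hF.apply_gen, (hF.localAt_gen hΓ hlarge hconn a).apply_gen,
    mul_right_inj] at himage
  exact hΓ.gen_injective himage

-- Compare the images of `ab` and `aba`, using that the label of the edge is at least `3`.
theorem vertexMap_localAt_gen_self {a b : V} (h : Γ.graph.Adj a b) :
    (F.localAt (artinGen Γ a)).vertexMap a = F.vertexMap a := by
  have hFa := hF.localAt_gen hΓ hlarge hconn a
  have himage := hF.apply_altProd hΓ h (hlarge h)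
  simp only [altProd, mul_one] at himage
  rw [F.apply_mul, hF.apply_gen, mul_right_inj, apply_mul, hFa.apply_gen,
    hF.vertexMap_localAt_gen_of_adj hΓ hlarge hconn h, mul_right_inj,
    (hFa.localAt_gen hΓ hlarge hconn b).apply_gen] at himage
  rw [← hFa.vertexMap_localAt_gen_of_adj hΓ hlarge hconn h.symm]
  exact hΓ.gen_injective himage

variable (hrigid : Γ.IsStarRigid)
include hrigid

theorem vertexMap_localAt_gen (a : V) : (F.localAt (artinGen Γ a)).vertexMap = F.vertexMap := by
  obtain _ | _ := subsingleton_or_nontrivial V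
  · exact Subsingleton.elim _ _
  obtain ⟨b, hb⟩ := hconn.exists_adj_of_nontrivial a
  have hFa := hF.localAt_gen hΓ hlarge hconn a
  have heq : (hFa.vertexIso hΓ).toEquiv = (hF.vertexIso hΓ).toEquiv :=
    hrigid.toEquiv_eq (hF.vertexMap_localAt_gen_self hΓ hlarge hconn hb)
      fun _ hw => hF.vertexMap_localAt_gen_of_adj hΓ hlarge hconn hw
  exact congrArg DFunLike.coe heq

theorem vertexMap_localAt_letter (x : V × Bool) :
    (F.localAt (letter Γ x)).vertexMap = F.vertexMap := by
  have hFx := hF.localAt_letter hΓ hlarge hconn x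
  rcases x with ⟨a, _ | _⟩
  · rw [letter_false] at hFx ⊢
    simpa only [F.localAt_inv_localAt] using
      (hFx.vertexMap_localAt_gen hΓ hlarge hconn hrigid a).symm
  · exact hF.vertexMap_localAt_gen hΓ hlarge hconn hrigid a

theorem letterMap_eq (x : V × Bool) : F.letterMap x = (F.vertexMap x.1, x.2) := by
  refine Prod.ext ?_ (hF x)
  rcases x with ⟨a, _ | _⟩
  · have hback := congrArg Prod.fst (F.letterMap_localAt_letter hΓ (a, false))
    rw [← hF.vertexMap_localAt_letter hΓ hlarge hconn hrigid (a, false)]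
    exact hback.symm
  · rfl

theorem eq_artinAut (g : ArtinGroup Γ) : F g = (hF.vertexIso hΓ).artinAut g := by
  induction g using geodesic_induction generalizing F with
  | one => rw [F.apply_one, map_one]
  | mul x g _ ih =>
    have hFx := hF.localAt_letter hΓ hlarge hconn x
    have haut : (hFx.vertexIso hΓ).artinAut = (hF.vertexIso hΓ).artinAut :=
      mulAut_ext Γ fun v => by
        rw [LabeledGraphIso.artinAut_gen, LabeledGraphIso.artinAut_gen]
        exact congrArg (artinGen Γ)
          (congrFun (hF.vertexMap_localAt_letter hΓ hlarge hconn hrigid x) v)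
    rw [F.apply_mul, map_mul, ih hFx, haut, LabeledGraphIso.artinAut_letter, F.apply_letter,
      hF.letterMap_eq hΓ hlarge hconn hrigid]
    rfl

end IsPositive

end BasedIsometry

section Deduction

variable {V : Type*} {Γ : LabeledGraph V}

theorem LabeledGraphIso.len_artinAut (α : LabeledGraphIso Γ Γ) (g : ArtinGroup Γ) :
    len (α.artinAut g) = len g := by
  have hle : ∀ (β : LabeledGraphIso Γ Γ) (h : ArtinGroup Γ), len (β.artinMap h) ≤ len h :=
    fun β => wordLength_map_le (closure_range_gen Γ) (closure_range_gen Γ) β.artinMap (by simp)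
  refine (hle α g).antisymm ?_
  calc len g = len (α.artinAut.symm (α.artinAut g)) := by rw [MulEquiv.symm_apply_apply]
    _ ≤ len (α.artinAut g) := hle α.symm _

theorem LabeledGraphIso.artinAut_mem (α : LabeledGraphIso Γ Γ) :
    α.artinAut ∈ specialAutGroup Γ :=
  Subgroup.subset_closure (.inr ⟨α, α.artinAut_gen⟩)

theorem ArtinGroup.inversion_mem : inversion Γ ∈ specialAutGroup Γ :=
  Subgroup.subset_closure (.inl (inversion_gen Γ))

theorem ArtinGroup.len_apply_of_mem_specialAutGroup {ψ : MulAut (ArtinGroup Γ)}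
    (hψ : ψ ∈ specialAutGroup Γ) (g : ArtinGroup Γ) : len (ψ g) = len g := by
  induction hψ using Subgroup.closure_induction generalizing g with
  | mem ψ h =>
    obtain h | ⟨α, h⟩ := h
    · rw [mulAut_ext Γ fun v => (h v).trans (inversion_gen Γ v).symm, len_inversion]
    · rw [mulAut_ext Γ fun v => (h v).trans (α.artinAut_gen v).symm, α.len_artinAut]
  | one => rfl
  | mul φ ψ _ _ hφ hψ => rw [MulAut.mul_apply, hφ, hψ]
  | inv ψ _ h => rw [← h, MulAut.apply_inv_self]

theorem isIsometryOf_artinDist_iff {f : ArtinGroup Γ → ArtinGroup Γ} :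
    IsIsometryOf (artinDist Γ) f ↔ ∀ g h, len ((f g)⁻¹ * f h) = len (g⁻¹ * h) :=
  forall₂_congr fun _ _ => Nat.cast_inj

theorem isIsometryOf_mul_apply (g : ArtinGroup Γ) {ψ : MulAut (ArtinGroup Γ)}
    (hψ : ψ ∈ specialAutGroup Γ) : IsIsometryOf (artinDist Γ) (fun x => g * ψ x) :=
  isIsometryOf_artinDist_iff.2 fun x y => by
    rw [mul_inv_rev, mul_assoc, inv_mul_cancel_left, ← map_inv, ← map_mul,
      len_apply_of_mem_specialAutGroup hψ]

/-- The based isometry obtained from a bijective isometry `f` by moving `f 1` to `1`. -/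
noncomputable def BasedIsometry.ofIsometry (f : ArtinGroup Γ → ArtinGroup Γ)
    (hf : Function.Bijective f) (hiso : IsIsometryOf (artinDist Γ) f) : BasedIsometry Γ where
  toEquiv := (Equiv.ofBijective f hf).trans (Equiv.mulLeft (f 1)⁻¹)
  map_one' := by simp
  len_eq' g h := by simpa [mul_assoc] using isIsometryOf_artinDist_iff.1 hiso g h

theorem BasedIsometry.exists_mem_specialAutGroup (F : BasedIsometry Γ) (hΓ : Γ.TameGeodesics)
    (hlarge : ∀ ⦃a b⦄, Γ.graph.Adj a b → 3 ≤ Γ.label a b) (hconn : Γ.graph.Preconnected)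
    (hrigid : Γ.IsStarRigid) : ∃ ψ ∈ specialAutGroup Γ, ∀ g, F g = ψ g := by
  obtain hF | hF := F.isPositive_or_isPositive_invert hΓ hlarge hconn
  · exact ⟨_, (hF.vertexIso hΓ).artinAut_mem, hF.eq_artinAut hΓ hlarge hconn hrigid⟩
  · refine ⟨_, mul_mem inversion_mem (hF.vertexIso hΓ).artinAut_mem, fun g => ?_⟩
    rw [MulAut.mul_apply, ← hF.eq_artinAut hΓ hlarge hconn hrigid, invert_apply,
      inversion_inversion]

end Deduction

theorem isometry_group_is_semidirect_product_general {V : Type*} [Finite V]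
    (Γ : LabeledGraph V) (htf : Γ.graph.CliqueFree 3)
    (hlarge : ∀ ⦃a b⦄, Γ.graph.Adj a b → 3 ≤ Γ.label a b)
    (hconn : Γ.graph.Preconnected) (hrigid : Γ.IsStarRigid) :
    (∀ f : ArtinGroup Γ → ArtinGroup Γ,
        Function.Bijective f → IsIsometryOf (artinDist Γ) f →
          ∃! p : ArtinGroup Γ × ↥(specialAutGroup Γ),
            ∀ x, f x = p.1 * (p.2 : MulAut (ArtinGroup Γ)) x) ∧
      ∀ (g : ArtinGroup Γ) (ψ : ↥(specialAutGroup Γ)),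
        Function.Bijective (fun x => g * (ψ : MulAut (ArtinGroup Γ)) x) ∧
          IsIsometryOf (artinDist Γ) (fun x => g * (ψ : MulAut (ArtinGroup Γ)) x) := by
  refine ⟨fun f hf hiso => ?_, fun g ψ =>
    ⟨(Group.mulLeft_bijective g).comp ψ.1.bijective, isIsometryOf_mul_apply g ψ.2⟩⟩
  obtain ⟨ψ, hψ, hfψ⟩ := (BasedIsometry.ofIsometry f hf hiso).exists_mem_specialAutGroup
    (Γ.tameGeodesics_of_cliqueFree htf) hlarge hconn hrigid
  have hdecomp : ∀ x, f x = f 1 * ψ x := fun x => eq_mul_of_inv_mul_eq (hfψ x)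
  refine ⟨(f 1, ⟨ψ, hψ⟩), hdecomp, ?_⟩
  rintro ⟨g, φ⟩ hφ
  obtain rfl : g = f 1 := by simpa using (hφ 1).symm
  refine Prod.ext rfl (Subtype.ext (MulEquiv.ext fun x => ?_))
  exact mul_left_cancel ((hφ x).symm.trans (hdecomp x))

/-- Under the strong rigidity conditions, every bijective isometry
`f` of `(A_Γ, d)` factors uniquely as `f(x) = g · ψ(x)` with `g ∈ A_Γ` and `ψ ∈ N`,
and conversely every such map is a bijective isometry; hence
`Isom(A_Γ, d) ≅ A_Γ ⋊ N`. -/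
theorem isometry_group_is_semidirect_product {V : Type*} [Finite V]
    (Γ : LabeledGraph V)
    (htf : Γ.graph.CliqueFree 3)
    (hlarge : ∀ ⦃a b⦄, Γ.graph.Adj a b → 3 ≤ Γ.label a b)
    (hconn : Γ.graph.Connected) (hcard : 3 ≤ Nat.card V)
    (hsep : ¬ Γ.HasSeparatingVertexOrEdge)
    (hrigid : ∀ α : LabeledGraphIso Γ Γ,
      (∃ v : V, α.toEquiv v = v ∧ ∀ w : V, Γ.graph.Adj v w → α.toEquiv w = w) →
        α.toEquiv = Equiv.refl V) :
    (∀ f : ArtinGroup Γ → ArtinGroup Γ,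
        Function.Bijective f → IsIsometryOf (artinDist Γ) f →
          ∃! p : ArtinGroup Γ × ↥(specialAutGroup Γ),
            ∀ x, f x = p.1 * (p.2 : MulAut (ArtinGroup Γ)) x) ∧
      ∀ (g : ArtinGroup Γ) (ψ : ↥(specialAutGroup Γ)),
        Function.Bijective (fun x => g * (ψ : MulAut (ArtinGroup Γ)) x) ∧
          IsIsometryOf (artinDist Γ) (fun x => g * (ψ : MulAut (ArtinGroup Γ)) x) :=
  isometry_group_is_semidirect_product_general Γ htf hlarge hconn.preconnected hrigid
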